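/- arXiv:2310.00292 — 3 statements merged into one kernel-verified Lean document; each statement's English description precedes it below -/
import Mathlib

section
/- Let μ = f·Lⁿ ∈ 𝒲(ℝⁿ), let U ⊆ ℝⁿ be open and bounded, and let g ∈ BV_μ(U) ∩ L^∞(U). Let 𝒦 be the union of all open sets O ⊆ ℝⁿ on which g is constant. Then there exist a constant C(n), depending only on the dimension n, and a family of smooth functions (g_ε)_{ε>0} ⊆ C^∞(U) ∩ BV_μ(U) such that g_ε → g in L¹(μ, U) as ε → 0, ‖g_ε‖_∞ ≤ ‖g‖_∞·(1 + 2ε) for all ε > 0, and limsup_{ε→0} ‖g_ε‖_{BV_μ(U)} ≤ ‖g‖_{BV_μ(U)} + C(n)·‖g‖_∞·∫_{U∖𝒦} |∇f| dx. -/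
open MeasureTheory Set Filter
open scoped ENNReal RealInnerProductSpace Topology

noncomputable section

/-- Euclidean space ℝⁿ. -/
abbrev En (n : ℕ) := EuclideanSpace ℝ (Fin n)

/-- Divergence of a vector field on ℝⁿ. -/
noncomputable def dvg {n : ℕ} (φ : En n → En n) (x : En n) : ℝ :=
  ∑ i : Fin n, fderiv ℝ φ x (EuclideanSpace.single i 1) i

/-- `f'` is the (weak) gradient of `f`, and both are locally integrable;
this encodes `f ∈ W^{1,1}_loc(ℝⁿ)` with weak gradient `∇f = f'`. -/
def HasWeakGrad {n : ℕ} (f : En n → ℝ) (f' : En n → En n) : Prop :=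
  LocallyIntegrable f volume ∧ LocallyIntegrable f' volume ∧
    ∀ φ : En n → En n, ContDiff ℝ 1 φ → HasCompactSupport φ →
      (∫ x, f x * dvg φ x) = - ∫ x, ⟪φ x, f' x⟫

/-- Membership of `μ = f·Lⁿ` in the class `𝒲(ℝⁿ)`: the density `f` is non-negative,
integrable and lies in `W^{1,1}_loc(ℝⁿ)` with weak gradient `f'`. -/
def MemW {n : ℕ} (f : En n → ℝ) (f' : En n → En n) : Prop :=
  (∀ x, 0 ≤ f x) ∧ Integrable f volume ∧ HasWeakGrad f f'

/-- Admissible test vector fields: `C¹`, compactly supported in `U`, sup-norm at most 1. -/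
def IsTestField {n : ℕ} (U : Set (En n)) (φ : En n → En n) : Prop :=
  ContDiff ℝ 1 φ ∧ HasCompactSupport φ ∧ tsupport φ ⊆ U ∧ ∀ x, ‖φ x‖ ≤ 1

/-- The weighted variation `‖g‖_{BV_μ(U)}` (valued in `ℝ≥0∞`;
membership in `BV_μ(U)` means that this quantity is finite). -/
noncomputable def bvVar {n : ℕ} (f : En n → ℝ) (f' : En n → En n) (U : Set (En n))
    (g : En n → ℝ) : ℝ≥0∞ :=
  ⨆ (φ : En n → En n) (_ : IsTestField U φ),
    ENNReal.ofReal (∫ x in U, g x * (f x * dvg φ x + ⟪φ x, f' x⟫))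

/-- The weighted perimeter `Per_μ(E; U)`. -/
noncomputable def perim {n : ℕ} (f : En n → ℝ) (f' : En n → En n) (U : Set (En n))
    (E : Set (En n)) : ℝ≥0∞ :=
  bvVar f f' U (E.indicator fun _ => (1 : ℝ))

/-- The measure `μ = f·Lⁿ`. -/
noncomputable def muM {n : ℕ} (f : En n → ℝ) : Measure (En n) :=
  volume.withDensity fun x => ENNReal.ofReal (f x)

/-- One-dimensional generalized Ehrhard symmetrization of `A ⊆ ℝ` in direction `v ∈ {−1,+1}`
with respect to a measure `ν` on `ℝ`: the largest half-line `{t : v·t ≥ c}` of `ν`-measure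
`ν A` (with the conventions `∅`, `ℝ` when `c = ±∞`). -/
def ehrhard1D (ν : Measure ℝ) (v : ℝ) (A : Set ℝ) : Set ℝ :=
  {t | ∀ b : ℝ, (∀ c : ℝ, ν {y | c ≤ v * y} ≤ ν A → b ≤ c) → b ≤ v * t}

/-- The weighted measure `f·H¹` on the fiber `{x + t·v : t ∈ ℝ}`, identified with `ℝ`. -/
noncomputable def fiberMeasure {n : ℕ} (f : En n → ℝ) (x v : En n) : Measure ℝ :=
  (volume : Measure ℝ).withDensity fun t => ENNReal.ofReal (f (x + t • v))

/-- Generalized `v`-Ehrhard symmetrization of `E ⊆ ℝⁿ` with respect to `μ = f·Lⁿ`: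
on each fiber over `v^⊥` one replaces `E` by the largest half-line in direction `v`
of the same weighted measure. -/
def ehrhardSymm {n : ℕ} (f : En n → ℝ) (v : En n) (E : Set (En n)) : Set (En n) :=
  {z | ⟪z, v⟫ ∈
      ehrhard1D (fiberMeasure f (z - ⟪z, v⟫ • v) v) 1
        {t | (z - ⟪z, v⟫ • v) + t • v ∈ E}}

/-- `μ = f·Lⁿ` is a perimeter symmetrization (PS) measure: generalized Ehrhard
symmetrization does not increase the weighted perimeter of sets of finite `μ`-perimeter. -/
def IsPSMeasure {n : ℕ} (f : En n → ℝ) (f' : En n → En n) : Prop :=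
  ∀ v : En n, ‖v‖ = 1 → ∀ E : Set (En n), NullMeasurableSet E volume →
    perim f f' univ E < ⊤ →
      perim f f' univ (ehrhardSymm f v E) ≤ perim f f' univ E

/-- The half-space `H(v, r) = {x : x·v ≥ r}`. -/
def halfSpace {n : ℕ} (v : En n) (r : ℝ) : Set (En n) := {x | r ≤ ⟪x, v⟫}

/-- `H_μ(E, v)`: the largest half-space in direction `v` with `μ`-measure `μ(E)`. -/
def halfSpaceOf {n : ℕ} (f : En n → ℝ) (E : Set (En n)) (v : En n) : Set (En n) :=
  {x | ∀ b : ℝ, (∀ c : ℝ, muM f (halfSpace v c) ≤ muM f E → b ≤ c) → b ≤ ⟪x, v⟫}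

/-- `g'` is the weak derivative of `g : ℝ → ℝ` (so `g ∈ W^{1,1}_loc(ℝ)`). -/
def HasWeakDeriv (g g' : ℝ → ℝ) : Prop :=
  LocallyIntegrable g volume ∧ LocallyIntegrable g' volume ∧
    ∀ φ : ℝ → ℝ, ContDiff ℝ 1 φ → HasCompactSupport φ →
      (∫ t, g t * deriv φ t) = - ∫ t, φ t * g' t

/-!
The approximations are mollifications of `g` glued by a partition of unity of `U`, as in the
Meyers-Serrin theorem. The variation of `ρ * h`, for a mollifier `ρ` of radius `δ`, tested on a
bounded field `p`, is compared with that of `h` tested on the smooth field `ρ * p`. By Fubini the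
difference consists of the commutator `∬ (f x - f y) ⟪∇ρ (x - y), p x⟫ h y dx dy` and of
`∫ h ⟪ρ * p, ∇f⟫`. Since `‖f - f (· - z)‖_{L¹} ≤ ‖z‖ ∫ |∇f|`, in a localized form, and since
`δ ∫ |∇ρ|` does not depend on `δ`, both are bounded by a multiple of `‖h‖_∞ ∫ |∇f|` over a
neighbourhood of the support of `p`.

The improvement comes from `∇(ρ * h)` being zero wherever `h` is constant on the ball of radius
`δ`: there `p` may be replaced by `0` at no cost. As `δ → 0` these sets exhaust the union `𝒦` of
the open sets on which `h` is constant, so only the integral of `|∇f|` off `𝒦` survives. When the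
pieces are summed over the partition of unity `ζ k`, their test fields add up to a field bounded by
`1 + ε`, and the terms with `∇(ζ k)` are small because `∑ ∇(ζ k) = 0` and the pieces are close to
`h` in `L¹(μ)`.

No measurability of `g` is assumed. If `g` is measurable for `μ`, it agrees almost everywhere on
`{f > 0}` with a bounded Lebesgue measurable `h` equal to it, up to truncation, on `𝒦`; the values
on `{f = 0}` play no role since `∇f = 0` almost everywhere there.
-/

section

open scoped ContDiff

/-! ### Mollification -/

section Mollification

variable {E F : Type*} [NormedAddCommGroup E] [NormedSpace ℝ E] [FiniteDimensional ℝ E]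
  [NormedAddCommGroup F] [NormedSpace ℝ F]

lemma bump_eq_comp_smul {φ ψ : ContDiffBump (0 : E)}
    (h : φ.rOut / φ.rIn = ψ.rOut / ψ.rIn) (x : E) :
    φ x = ψ ((φ.rOut / ψ.rOut)⁻¹ • x) := by
  have hscale : φ.rIn⁻¹ = ψ.rIn⁻¹ * (φ.rOut / ψ.rOut)⁻¹ := by
    have := φ.rIn_pos; have := ψ.rIn_pos; have := φ.rOut_pos; have := ψ.rOut_pos
    field_simp at h ⊢
    linarith
  simp only [ContDiffBump.apply, sub_zero, smul_smul, h, hscale]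

variable [MeasureSpace E]

/-- The mollification of `h` at scale `φ.rOut`: its convolution with the normalized bump `φ`. -/
def mollify (φ : ContDiffBump (0 : E)) (h : E → F) : E → F :=
  convolution (φ.normed volume) h (ContinuousLinearMap.lsmul ℝ ℝ) volume

/-- The mean size of the gradient of the normalized bump `φ`, multiplied by the radius of its
support. This makes it invariant under rescaling of `φ`. -/
def bumpGradConst (φ : ContDiffBump (0 : E)) : ℝ :=
  φ.rOut * ∫ x, ‖fderiv ℝ (φ.normed volume) x‖

/-- A sequence of rescalings of one bump function, with radii `1 / (j + 1)`. -/
def stdMollifier (E : Type*) [NormedAddCommGroup E] (j : ℕ) : ContDiffBump (0 : E) where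
  rIn := 1 / (j + 1) / 2
  rOut := 1 / (j + 1)
  rIn_pos := by positivity
  rIn_lt_rOut := half_lt_self (by positivity)

lemma continuous_fderiv_normed (φ : ContDiffBump (0 : E)) :
    Continuous (fderiv ℝ (φ.normed volume)) :=
  (φ.contDiff_normed (n := 1)).continuous_fderiv one_ne_zero

lemma bumpGradConst_nonneg (φ : ContDiffBump (0 : E)) : 0 ≤ bumpGradConst φ :=
  mul_nonneg φ.rOut_pos.le (integral_nonneg fun _ => norm_nonneg _)

lemma fderiv_normed_neg (φ : ContDiffBump (0 : E)) (x : E) :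
    fderiv ℝ (φ.normed volume) (-x) = -fderiv ℝ (φ.normed volume) x := by
  have heven : (fun y => φ.normed volume (-y)) = φ.normed volume := funext φ.normed_neg
  have := fderiv_comp_smul (f := φ.normed volume) (x := x) (-1 : ℝ)
  simp only [neg_one_smul, heven] at this
  rw [this, neg_neg]

variable [BorelSpace E] [(volume : Measure E).IsAddHaarMeasure]

lemma mollify_apply (φ : ContDiffBump (0 : E)) (h : E → F) (x : E) :
    mollify φ h x = ∫ y, φ.normed volume (x - y) • h y := by
  rw [mollify, convolution_lsmul_swap]

lemma contDiff_mollify (φ : ContDiffBump (0 : E)) {h : E → F} (hh : LocallyIntegrable h) :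
    ContDiff ℝ ∞ (mollify φ h) :=
  φ.hasCompactSupport_normed.contDiff_convolution_left _ φ.contDiff_normed hh

lemma norm_mollify_le (φ : ContDiffBump (0 : E)) [CompleteSpace F] {h : E → F}
    (hh : AEStronglyMeasurable h) {x : E} {m : ℝ} (hm : ∀ y, ‖x - y‖ < φ.rOut → ‖h y‖ ≤ m) :
    ‖mollify φ h x‖ ≤ m := by
  have hm₀ : 0 ≤ m := (norm_nonneg _).trans (hm x (by simpa using φ.rOut_pos))
  rw [← dist_zero_right]
  refine dist_convolution_le hm₀ φ.support_normed_eq.subset φ.nonneg_normed φ.integral_normed hh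
    fun y hy => ?_
  rw [dist_zero_right]
  exact hm y (by rwa [← dist_eq_norm, dist_comm])

lemma mollify_eq_of_eqOn_ball (φ : ContDiffBump (0 : E)) [CompleteSpace F] {h : E → F} {x : E}
    (hx : ∀ y ∈ Metric.ball x φ.rOut, h y = h x) : mollify φ h x = h x :=
  φ.normed_convolution_eq_right hx

lemma tsupport_mollify_subset (φ : ContDiffBump (0 : E)) {h : E → F} {S : Set E}
    (hS : ∀ x ∉ S, h x = 0) : tsupport (mollify φ h) ⊆ Metric.cthickening φ.rOut S := by
  refine closure_minimal (fun x hx => ?_) Metric.isClosed_cthickening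
  by_contra hc
  refine hx ?_
  rw [mollify_apply]
  refine integral_eq_zero_of_ae (Eventually.of_forall fun y => ?_)
  by_cases hy : y ∈ S
  · have hxy : x - y ∉ Function.support (φ.normed volume) := by
      rw [φ.support_normed_eq, mem_ball_zero_iff, ← dist_eq_norm]
      exact fun hlt => hc (Metric.mem_cthickening_of_dist_le x y _ S hy hlt.le)
    simp [Function.notMem_support.1 hxy]
  · simp [hS y hy]

lemma hasCompactSupport_mollify (φ : ContDiffBump (0 : E)) {h : E → F}
    (hh : HasCompactSupport h) : HasCompactSupport (mollify φ h) :=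
  φ.hasCompactSupport_normed.convolution _ hh

lemma ae_tendsto_mollify_stdMollifier [CompleteSpace F] {h : E → F} (hh : LocallyIntegrable h) :
    ∀ᵐ x, Tendsto (fun j => mollify (stdMollifier E j) h x) atTop (𝓝 (h x)) :=
  ContDiffBump.ae_convolution_tendsto_right_of_locallyIntegrable (K := 2)
    tendsto_one_div_add_atTop_nhds_zero_nat
    (Eventually.of_forall fun _ => by simp only [stdMollifier]; linarith) hh

lemma hasCompactSupport_fderiv_normed (φ : ContDiffBump (0 : E)) :
    HasCompactSupport (fderiv ℝ (φ.normed volume)) :=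
  φ.hasCompactSupport_normed.fderiv ℝ

lemma integrable_fderiv_normed (φ : ContDiffBump (0 : E)) :
    Integrable (fderiv ℝ (φ.normed volume)) :=
  (continuous_fderiv_normed φ).integrable_of_hasCompactSupport (hasCompactSupport_fderiv_normed φ)

lemma fderiv_normed_eq_zero (φ : ContDiffBump (0 : E)) {x : E} (hx : φ.rOut < ‖x‖) :
    fderiv ℝ (φ.normed volume) x = 0 := by
  by_contra h
  have := support_fderiv_subset ℝ (Function.mem_support.2 h)
  rw [φ.tsupport_normed_eq, mem_closedBall_zero_iff] at this
  exact hx.not_ge this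

lemma fderiv_mollify_apply (φ : ContDiffBump (0 : E)) {h : E → F}
    (hh : LocallyIntegrable h) (x v : E) :
    fderiv ℝ (mollify φ h) x v = ∫ y, fderiv ℝ (φ.normed volume) (x - y) v • h y := by
  rw [mollify, (φ.hasCompactSupport_normed.hasFDerivAt_convolution_left _
    (φ.contDiff_normed (n := 1)) hh x).fderiv, convolution_eq_swap,
    ContinuousLinearMap.integral_apply]
  · rfl
  · exact (((hasCompactSupport_fderiv_normed φ).convolutionExists_left _
      (continuous_fderiv_normed φ) hh) x).integrable_swap

lemma fderiv_mollify_eq_zero (φ : ContDiffBump (0 : E)) [CompleteSpace F] {h : E → F} {x : E}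
    {c : F} {r : ℝ} (hr : φ.rOut < r) (hx : ∀ y ∈ Metric.ball x r, h y = c) :
    fderiv ℝ (mollify φ h) x = 0 := by
  have hconst : mollify φ h =ᶠ[𝓝 x] fun _ => c := by
    filter_upwards [Metric.ball_mem_nhds x (sub_pos.2 hr)] with y hy
    have hsub : Metric.ball y φ.rOut ⊆ Metric.ball x r :=
      Metric.ball_subset_ball' (by linarith [Metric.mem_ball.1 hy])
    have hy' := hx y (hsub (Metric.mem_ball_self φ.rOut_pos))
    rw [mollify_eq_of_eqOn_ball φ fun z hz => (hx z (hsub hz)).trans hy'.symm, hy']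
  rw [hconst.fderiv_eq, fderiv_const_apply]

lemma normed_bump_eq_comp_smul {φ ψ : ContDiffBump (0 : E)}
    (h : φ.rOut / φ.rIn = ψ.rOut / ψ.rIn) :
    φ.normed volume = fun x => ((φ.rOut / ψ.rOut) ^ Module.finrank ℝ E)⁻¹ *
      ψ.normed volume ((φ.rOut / ψ.rOut)⁻¹ • x) := by
  have hr : 0 < φ.rOut / ψ.rOut := div_pos φ.rOut_pos ψ.rOut_pos
  have hint : ∫ x, φ x = (φ.rOut / ψ.rOut) ^ Module.finrank ℝ E * ∫ x, ψ x := by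
    simp_rw [bump_eq_comp_smul h]
    exact Measure.integral_comp_inv_smul_of_nonneg volume (fun x => ψ x) hr.le
  ext x
  rw [ContDiffBump.normed_def, ContDiffBump.normed_def, bump_eq_comp_smul h, hint,
    div_mul_eq_div_div_swap, inv_mul_eq_div]

lemma norm_fderiv_normed_bump_comp_smul {φ ψ : ContDiffBump (0 : E)}
    (h : φ.rOut / φ.rIn = ψ.rOut / ψ.rIn) (x : E) :
    ‖fderiv ℝ (φ.normed volume) x‖ =
      ((φ.rOut / ψ.rOut) ^ Module.finrank ℝ E)⁻¹ * (φ.rOut / ψ.rOut)⁻¹ *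
        ‖fderiv ℝ (ψ.normed volume) ((φ.rOut / ψ.rOut)⁻¹ • x)‖ := by
  have hr : 0 < φ.rOut / ψ.rOut := div_pos φ.rOut_pos ψ.rOut_pos
  have hψ : Differentiable ℝ (ψ.normed volume) :=
    (ψ.contDiff_normed (n := 1)).differentiable one_ne_zero
  rw [normed_bump_eq_comp_smul h, fderiv_const_mul (by fun_prop), fderiv_comp_smul, norm_smul,
    norm_smul, Real.norm_of_nonneg (by positivity), Real.norm_of_nonneg (by positivity), mul_assoc]

lemma bumpGradConst_eq_of_ratio_eq {φ ψ : ContDiffBump (0 : E)}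
    (h : φ.rOut / φ.rIn = ψ.rOut / ψ.rIn) : bumpGradConst φ = bumpGradConst ψ := by
  have hφ := φ.rOut_pos
  have hψ := ψ.rOut_pos
  have hr : 0 < φ.rOut / ψ.rOut := div_pos hφ hψ
  simp_rw [bumpGradConst, norm_fderiv_normed_bump_comp_smul h]
  rw [integral_const_mul, Measure.integral_comp_inv_smul_of_nonneg volume
    (fun x => ‖fderiv ℝ (ψ.normed volume) x‖) hr.le, smul_eq_mul]
  field_simp

lemma bumpGradConst_stdMollifier (j : ℕ) :
    bumpGradConst (stdMollifier E j) = bumpGradConst (stdMollifier E 0) := by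
  refine bumpGradConst_eq_of_ratio_eq ?_
  simp only [stdMollifier]
  field_simp

end Mollification

/-! ### Divergence against a weight -/

/-- The weak divergence `div (f φ) = f div φ + φ · ∇f`, where `f'` is the weak gradient of `f`. -/
def weakDiv {n : ℕ} (f : En n → ℝ) (f' : En n → En n) (φ : En n → En n) (x : En n) : ℝ :=
  f x * dvg φ x + ⟪φ x, f' x⟫

section Divergence

variable {n : ℕ} {f : En n → ℝ} {f' : En n → En n} {φ : En n → En n} {x : En n}

lemma sum_clm_single_mul (L : En n →L[ℝ] ℝ) (v : En n) :
    ∑ i, L (EuclideanSpace.single i 1) * v i = L v := by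
  conv_rhs => rw [← (EuclideanSpace.basisFun (Fin n) ℝ).sum_repr v]
  simp [map_sum, mul_comm]

lemma dvg_smul {b : En n → ℝ} (hb : DifferentiableAt ℝ b x) (hφ : DifferentiableAt ℝ φ x) :
    dvg (fun y => b y • φ y) x = b x * dvg φ x + fderiv ℝ b x (φ x) := by
  simp only [dvg, fderiv_fun_smul hb hφ, Finset.mul_sum, ← sum_clm_single_mul (fderiv ℝ b x) (φ x),
    ← Finset.sum_add_distrib]
  simp

lemma dvg_sum {ι : Type*} (s : Finset ι) {φ : ι → En n → En n}
    (hφ : ∀ i ∈ s, DifferentiableAt ℝ (φ i) x) :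
    dvg (fun y => ∑ i ∈ s, φ i y) x = ∑ i ∈ s, dvg (φ i) x := by
  simp only [dvg, fderiv_fun_sum hφ]
  rw [Finset.sum_comm]
  simp

lemma dvg_smul_const {b : En n → ℝ} (hb : DifferentiableAt ℝ b x) (v : En n) :
    dvg (fun y => b y • v) x = fderiv ℝ b x v := by
  rw [dvg_smul hb (differentiableAt_const v)]
  simp [dvg]

lemma dvg_mollify (ψ : ContDiffBump (0 : En n)) {h : En n → En n} (hh : LocallyIntegrable h)
    (x : En n) : dvg (mollify ψ h) x = ∫ y, fderiv ℝ (ψ.normed volume) (x - y) (h y) := by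
  have hint (v : En n) : Integrable fun y => fderiv ℝ (ψ.normed volume) (x - y) v • h y := by
    have hc : HasCompactSupport fun y => fderiv ℝ (ψ.normed volume) y v :=
      (hasCompactSupport_fderiv_normed ψ).comp_left (g := fun L : En n →L[ℝ] ℝ => L v) rfl
    exact ((hc.convolutionExists_left (ContinuousLinearMap.lsmul ℝ ℝ)
      ((continuous_fderiv_normed ψ).clm_apply continuous_const) hh) x).integrable_swap
  have hproj (i : Fin n) := (EuclideanSpace.proj (𝕜 := ℝ) i).integrable_comp
    (hint (EuclideanSpace.single i 1))
  have hcoord (i : Fin n) : fderiv ℝ (mollify ψ h) x (EuclideanSpace.single i 1) i =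
      ∫ y, fderiv ℝ (ψ.normed volume) (x - y) (EuclideanSpace.single i 1) * h y i := by
    rw [fderiv_mollify_apply ψ hh]
    exact ((EuclideanSpace.proj (𝕜 := ℝ) i).integral_comp_comm (hint _)).symm
  simp_rw [dvg, hcoord, ← sum_clm_single_mul _ (h _)]
  exact (integral_finsetSum _ fun i _ => hproj i).symm

lemma continuous_dvg (hφ : ContDiff ℝ 1 φ) : Continuous (dvg φ) := by
  have := hφ.continuous_fderiv one_ne_zero
  unfold dvg
  fun_prop

lemma dvg_eq_zero_of_notMem_tsupport (hx : x ∉ tsupport φ) : dvg φ x = 0 := by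
  have : fderiv ℝ φ x = 0 := by
    by_contra h
    exact hx (support_fderiv_subset ℝ h)
  simp [dvg, this]

lemma weakDiv_eq_zero_of_notMem_tsupport (hx : x ∉ tsupport φ) : weakDiv f f' φ x = 0 := by
  simp [weakDiv, dvg_eq_zero_of_notMem_tsupport hx, image_eq_zero_of_notMem_tsupport hx]

lemma weakDiv_smul {b : En n → ℝ} (hb : DifferentiableAt ℝ b x) (hφ : DifferentiableAt ℝ φ x) :
    weakDiv f f' (fun y => b y • φ y) x =
      b x * weakDiv f f' φ x + f x * fderiv ℝ b x (φ x) := by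
  simp only [weakDiv, dvg_smul hb hφ, real_inner_smul_left]
  ring

lemma weakDiv_const_smul (c : ℝ) (hφ : DifferentiableAt ℝ φ x) :
    weakDiv f f' (fun y => c • φ y) x = c * weakDiv f f' φ x := by
  simp [weakDiv_smul (differentiableAt_const c) hφ]

lemma weakDiv_sum {ι : Type*} (s : Finset ι) {φ : ι → En n → En n}
    (hφ : ∀ i ∈ s, DifferentiableAt ℝ (φ i) x) :
    weakDiv f f' (fun y => ∑ i ∈ s, φ i y) x = ∑ i ∈ s, weakDiv f f' (φ i) x := by
  simp only [weakDiv, dvg_sum s hφ, Finset.mul_sum, sum_inner, Finset.sum_add_distrib]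

lemma integrable_mul_dvg (hf : LocallyIntegrable f) (hφ : ContDiff ℝ 1 φ)
    (hφc : HasCompactSupport φ) : Integrable fun x => f x * dvg φ x := by
  have hc : HasCompactSupport (dvg φ) :=
    HasCompactSupport.intro hφc fun _ => dvg_eq_zero_of_notMem_tsupport
  simpa only [smul_eq_mul] using
    hf.integrable_smul_right_of_hasCompactSupport (continuous_dvg hφ) hc

lemma integrable_inner_of_hasCompactSupport (hf' : LocallyIntegrable f') (hφ : Continuous φ)
    (hφc : HasCompactSupport φ) : Integrable fun x => ⟪φ x, f' x⟫ := by
  have hbound : Integrable fun x => ‖φ x‖ • f' x :=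
    hf'.integrable_smul_left_of_hasCompactSupport hφ.norm hφc.norm
  refine hbound.mono (hφ.aestronglyMeasurable.inner hf'.aestronglyMeasurable)
    (Eventually.of_forall fun x => ?_)
  simpa [norm_smul] using norm_inner_le_norm (𝕜 := ℝ) (φ x) (f' x)

lemma integrable_weakDiv (hw : HasWeakGrad f f') (hφ : ContDiff ℝ 1 φ)
    (hφc : HasCompactSupport φ) : Integrable (weakDiv f f' φ) :=
  (integrable_mul_dvg hw.1 hφ hφc).add
    (integrable_inner_of_hasCompactSupport hw.2.1 hφ.continuous hφc)

lemma integrable_mul_weakDiv (hw : HasWeakGrad f f') (hφ : ContDiff ℝ 1 φ)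
    (hφc : HasCompactSupport φ) {h : En n → ℝ} {M : ℝ} (hh : AEStronglyMeasurable h)
    (hM : ∀ x, |h x| ≤ M) : Integrable fun x => h x * weakDiv f f' φ x :=
  (integrable_weakDiv hw hφ hφc).bdd_mul hh (Eventually.of_forall hM)

lemma integral_weakDiv (hw : HasWeakGrad f f') (hφ : ContDiff ℝ 1 φ)
    (hφc : HasCompactSupport φ) : ∫ x, weakDiv f f' φ x = 0 := by
  simp only [weakDiv]
  rw [integral_add (integrable_mul_dvg hw.1 hφ hφc)
    (integrable_inner_of_hasCompactSupport hw.2.1 hφ.continuous hφc), hw.2.2 φ hφ hφc,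
    neg_add_cancel]

lemma integrable_mul_fderiv_apply (hf : LocallyIntegrable f) {b : En n → ℝ} (hb : ContDiff ℝ 1 b)
    (hφ : Continuous φ) (hφc : HasCompactSupport φ) :
    Integrable fun x => f x * fderiv ℝ b x (φ x) := by
  have hc : HasCompactSupport fun x => fderiv ℝ b x (φ x) :=
    HasCompactSupport.intro hφc fun x hx => by simp [image_eq_zero_of_notMem_tsupport hx]
  simpa only [smul_eq_mul] using hf.integrable_smul_right_of_hasCompactSupport
    ((hb.continuous_fderiv one_ne_zero).clm_apply hφ) hc

lemma integral_mul_weakDiv_of_contDiff (hw : HasWeakGrad f f') {b : En n → ℝ}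
    (hb : ContDiff ℝ 1 b) (hφ : ContDiff ℝ 1 φ) (hφc : HasCompactSupport φ) :
    ∫ x, b x * weakDiv f f' φ x = -∫ x, f x * fderiv ℝ b x (φ x) := by
  have hb' := hb.differentiable one_ne_zero
  have hφ' := hφ.differentiable one_ne_zero
  have hs : ContDiff ℝ 1 fun x => b x • φ x := hb.smul hφ
  have hsc : HasCompactSupport fun x => b x • φ x := hφc.smul_left (f := b)
  have hsub (x : En n) : b x * weakDiv f f' φ x =
      weakDiv f f' (fun y => b y • φ y) x - f x * fderiv ℝ b x (φ x) := by
    rw [weakDiv_smul (hb' x) (hφ' x), add_sub_cancel_right]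
  simp_rw [hsub]
  rw [integral_sub (integrable_weakDiv hw hs hsc)
    (integrable_mul_fderiv_apply hw.1 hb hφ.continuous hφc),
    integral_weakDiv hw hs hsc, zero_sub]

lemma setIntegral_mul_weakDiv {U : Set (En n)} (hφU : tsupport φ ⊆ U) (h : En n → ℝ) :
    ∫ x in U, h x * weakDiv f f' φ x = ∫ x, h x * weakDiv f f' φ x :=
  setIntegral_eq_integral_of_forall_compl_eq_zero fun x hx => by
    rw [weakDiv_eq_zero_of_notMem_tsupport fun hx' => hx (hφU hx'), mul_zero]

end Divergence

/-! ### Translations -/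

section Translation

lemma locallyIntegrable_of_norm_le {X F : Type*} [TopologicalSpace X] [MeasurableSpace X]
    {μ : Measure X} [IsLocallyFiniteMeasure μ] [NormedAddCommGroup F] {a : X → F} {A : ℝ}
    (ham : AEStronglyMeasurable a μ) (hA : ∀ x, ‖a x‖ ≤ A) : LocallyIntegrable a μ :=
  (locallyIntegrable_const A).mono ham (Eventually.of_forall fun x =>
    (hA x).trans (le_abs_self A))

variable {E : Type*} [NormedAddCommGroup E]

lemma mul_translate_eq_mul_indicator {S : Set E} {b : E → ℝ} (hb : ∀ x ∉ S, b x = 0) (v : E → ℝ)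
    {w : E} {r : ℝ} (hw : ‖w‖ ≤ r) (x : E) :
    b (x + w) * v x = b (x + w) * (Metric.cthickening r S).indicator v x := by
  by_cases hx : x + w ∈ S
  · have : x ∈ Metric.cthickening r S :=
      Metric.mem_cthickening_of_dist_le x (x + w) r S hx (by simpa using hw)
    rw [indicator_of_mem this]
  · simp [hb _ hx]

lemma abs_translate_mul_le {S : Set E} {b : E → ℝ} {A : ℝ} (hb : ∀ x ∉ S, b x = 0)
    (hA : ∀ x, |b x| ≤ A) (v : E → ℝ) {w : E} {r : ℝ} (hw : ‖w‖ ≤ r) (x : E) :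
    |b (x + w) * v x| ≤ A * |(Metric.cthickening r S).indicator v x| := by
  rw [mul_translate_eq_mul_indicator hb v hw, abs_mul]
  gcongr
  exact hA _

variable [NormedSpace ℝ E] [FiniteDimensional ℝ E] [MeasureSpace E] [BorelSpace E]

lemma integrable_indicator_cthickening {S : Set E} (hS : IsCompact S) {v : E → ℝ}
    (hv : LocallyIntegrable v) (r : ℝ) : Integrable ((Metric.cthickening r S).indicator v) :=
  (hv.integrableOn_isCompact hS.cthickening).integrable_indicator
    Metric.isClosed_cthickening.measurableSet

variable [(volume : Measure E).IsAddHaarMeasure]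

lemma continuous_integral_mul_comp_add {a u : E → ℝ} (ha : MemLp a ⊤ volume) (hu : Integrable u) :
    Continuous fun v => ∫ x, a x * u (v + x) := by
  have : Fact ((1 : ℝ≥0∞) ≠ ⊤) := ⟨ENNReal.one_ne_top⟩
  have hu' := memLp_one_iff_integrable.2 hu
  have hcont : Continuous fun v : E => DomAddAct.mk v +ᵥ hu'.toLp u := by
    exact (DomAddAct.continuous_mk).vadd continuous_const
  have := ((ContinuousLinearMap.mul ℝ ℝ).lpPairing volume ⊤ 1 (ha.toLp a)).continuous.comp hcont
  refine this.congr fun v => ?_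
  simp only [Function.comp_apply, ContinuousLinearMap.lpPairing_eq_integral,
    ContinuousLinearMap.mul_apply']
  refine integral_congr_ae ?_
  filter_upwards [ha.coeFn_toLp,
    (hu'.comp_measurePreserving (measurePreserving_vadd v volume)).coeFn_toLp] with x hxa hxu
  rw [hxa]
  exact congrArg _ hxu

lemma continuous_integral_translate_mul {a v : E → ℝ} (ha : MemLp a ⊤ volume)
    (hac : HasCompactSupport a) (hv : LocallyIntegrable v) :
    Continuous fun w => ∫ x, a (x + w) * v x := by
  refine continuous_iff_continuousAt.2 fun w₀ => ?_
  set u := (Metric.cthickening (‖w₀‖ + 1) (tsupport a)).indicator v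
  have hcont : Continuous fun w => ∫ x, a x * u (-w + x) :=
    (continuous_integral_mul_comp_add ha (integrable_indicator_cthickening hac hv _)).comp
      continuous_neg
  refine hcont.continuousAt.congr ?_
  filter_upwards [continuous_norm.continuousAt.eventually (gt_mem_nhds (lt_add_one ‖w₀‖))]
    with w hw
  rw [← integral_add_right_eq_self _ w]
  refine integral_congr_ae (Eventually.of_forall fun x => ?_)
  simp only [add_comm x w, neg_add_cancel_left]
  rw [add_comm w x]
  exact (mul_translate_eq_mul_indicator (S := tsupport a)
    (fun y => image_eq_zero_of_notMem_tsupport) v hw.le x).symm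

variable {a v : E → ℝ} {A : ℝ}

lemma integrable_translate_mul (ham : AEStronglyMeasurable a) (hA : ∀ x, |a x| ≤ A)
    (hac : HasCompactSupport a) (hv : LocallyIntegrable v) (w : E) :
    Integrable fun x => a (x + w) * v x := by
  simp_rw [mul_translate_eq_mul_indicator (S := tsupport a)
    (fun _ => image_eq_zero_of_notMem_tsupport) v le_rfl]
  exact (integrable_indicator_cthickening hac hv _).bdd_mul
    (ham.comp_quasiMeasurePreserving (measurePreserving_add_right volume w).quasiMeasurePreserving)
    (Eventually.of_forall fun x => hA _)

lemma mollify_stdMollifier_eq_zero {F : Type*} [NormedAddCommGroup F] [NormedSpace ℝ F]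
    (h : E → F) (j : ℕ) {x : E} (hx : x ∉ Metric.cthickening 1 (tsupport h)) :
    mollify (stdMollifier E j) h x = 0 := by
  have hr : (stdMollifier E j).rOut ≤ 1 := by
    simpa [stdMollifier] using inv_le_one_of_one_le₀ (by simp : (1 : ℝ) ≤ j + 1)
  by_contra hne
  exact hx (Metric.cthickening_mono hr _ (tsupport_mollify_subset (stdMollifier E j)
    (fun y => image_eq_zero_of_notMem_tsupport) (subset_tsupport _ hne)))

lemma abs_mollify_le (φ : ContDiffBump (0 : E)) (ham : AEStronglyMeasurable a)
    (hA : ∀ x, |a x| ≤ A) (x : E) : |mollify φ a x| ≤ A :=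
  norm_mollify_le φ ham fun y _ => hA y

lemma tendsto_integral_mollify_translate_mul (ham : AEStronglyMeasurable a)
    (hA : ∀ x, |a x| ≤ A) (hac : HasCompactSupport a) (hv : LocallyIntegrable v) (w : E) :
    Tendsto (fun j => ∫ x, mollify (stdMollifier E j) a (x + w) * v x) atTop
      (𝓝 (∫ x, a (x + w) * v x)) := by
  have hal := locallyIntegrable_of_norm_le ham hA
  refine tendsto_integral_of_dominated_convergence
    (fun x => A * |(Metric.cthickening ‖w‖ (Metric.cthickening 1 (tsupport a))).indicator v x|)
    (fun j => ?_)
    ((integrable_indicator_cthickening hac.isCompact.cthickening hv _).abs.const_mul A)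
    (fun j => Eventually.of_forall (abs_translate_mul_le
      (fun x => mollify_stdMollifier_eq_zero a j) (abs_mollify_le _ ham hA) v le_rfl)) ?_
  · exact ((contDiff_mollify _ hal).continuous.comp
      (continuous_id.add continuous_const)).aestronglyMeasurable.mul hv.aestronglyMeasurable
  · have hlim := (measurePreserving_add_right volume w).quasiMeasurePreserving.ae
      (ae_tendsto_mollify_stdMollifier hal)
    filter_upwards [hlim] with x hx using hx.mul_const _

end Translation

section WeakGradient

variable {n : ℕ} {f : En n → ℝ} {f' : En n → En n}

lemma HasWeakGrad.locallyIntegrable_inner (hw : HasWeakGrad f f') (z : En n) :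
    LocallyIntegrable fun x => ⟪z, f' x⟫ := fun x =>
  let ⟨s, hs, hi⟩ := hw.2.1 x
  ⟨s, hs, hi.const_inner z⟩

lemma integral_fderiv_translate_mul (hw : HasWeakGrad f f') {b : En n → ℝ}
    (hb : ContDiff ℝ 1 b) (hbc : HasCompactSupport b) (w z : En n) :
    ∫ x, fderiv ℝ b (x + w) z * f x = -∫ x, b (x + w) * ⟪z, f' x⟫ := by
  have hbw : ContDiff ℝ 1 fun x => b (x + w) := hb.comp (contDiff_id.add contDiff_const)
  have hdvg (x : En n) : dvg (fun x => b (x + w) • z) x = fderiv ℝ b (x + w) z := by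
    rw [dvg_smul_const (hbw.differentiable one_ne_zero x), fderiv_comp_add_right]
  have := hw.2.2 (fun x => b (x + w) • z) (hbw.smul contDiff_const)
    (hbc.comp_homeomorph (Homeomorph.addRight w)).smul_right
  simpa only [hdvg, real_inner_smul_left, mul_comm (f _)] using this

lemma hasDerivAt_integral_translate_mul_of_contDiff (hw : HasWeakGrad f f') {b : En n → ℝ}
    (hb : ContDiff ℝ 1 b) (hbc : HasCompactSupport b) (z : En n) (t : ℝ) :
    HasDerivAt (fun t : ℝ => ∫ x, b (x + t • z) * f x) (-∫ x, b (x + t • z) * ⟪z, f' x⟫) t := by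
  have hb' : Continuous fun x => fderiv ℝ b x z :=
    (hb.continuous_fderiv one_ne_zero).clm_apply continuous_const
  have hb'S (x : En n) (hx : x ∉ tsupport b) : fderiv ℝ b x z = 0 := by
    rw [fderiv_of_notMem_tsupport ℝ hx, zero_apply]
  obtain ⟨B, hB⟩ := hbc.exists_bound_of_continuous hb.continuous
  obtain ⟨B', hB'⟩ := (HasCompactSupport.intro hbc hb'S).exists_bound_of_continuous hb'
  have hint (t : ℝ) := integrable_translate_mul hb.continuous.aestronglyMeasurable hB hbc hw.1
    (t • z)
  rw [← integral_fderiv_translate_mul hw hb hbc]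
  refine (hasDerivAt_integral_of_dominated_loc_of_deriv_le (Metric.ball_mem_nhds t one_pos)
    (Eventually.of_forall fun t => (hint t).aestronglyMeasurable) (hint t)
    (F' := fun t x => fderiv ℝ b (x + t • z) z * f x)
    ((hb'.comp (continuous_id.add continuous_const)).aestronglyMeasurable.mul
      hw.1.aestronglyMeasurable)
    (bound := fun x => B' * |(Metric.cthickening ((|t| + 1) * ‖z‖) (tsupport b)).indicator f x|)
    (Eventually.of_forall fun x s hs => ?_)
    ((integrable_indicator_cthickening hbc hw.1 _).abs.const_mul B')
    (Eventually.of_forall fun x s _ => ?_)).2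
  · refine abs_translate_mul_le hb'S hB' f ?_ x
    have hs' : |s| - |t| ≤ |s - t| := abs_sub_abs_le_abs_sub s t
    rw [Metric.mem_ball, Real.dist_eq] at hs
    rw [norm_smul, Real.norm_eq_abs]
    gcongr
    linarith
  · have hline : HasDerivAt (fun s : ℝ => x + s • z) z s := by
      simpa using ((hasDerivAt_id s).smul_const z).const_add x
    exact ((hb.differentiable one_ne_zero _).hasFDerivAt.comp_hasDerivAt s hline).mul_const _

variable {a : En n → ℝ} {A : ℝ}

lemma continuous_integral_translate_smul_mul_inner (hw : HasWeakGrad f f')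
    (ham : AEStronglyMeasurable a) (hA : ∀ x, |a x| ≤ A) (hac : HasCompactSupport a) (z : En n) :
    Continuous fun t : ℝ => ∫ x, a (x + t • z) * ⟪z, f' x⟫ :=
  (continuous_integral_translate_mul (memLp_top_of_bound ham A (Eventually.of_forall hA)) hac
    (hw.locallyIntegrable_inner z)).comp (continuous_id.smul continuous_const)

lemma integral_translate_mul_sub_of_contDiff (hw : HasWeakGrad f f') {b : En n → ℝ}
    (hb : ContDiff ℝ 1 b) (hbc : HasCompactSupport b) (z : En n) (s : ℝ) :
    ∫ t in 0..s, ∫ x, b (x + t • z) * ⟪z, f' x⟫ =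
      (∫ x, b x * f x) - ∫ x, b (x + s • z) * f x := by
  obtain ⟨B, hB⟩ := hbc.exists_bound_of_continuous hb.continuous
  have hcont := continuous_integral_translate_smul_mul_inner hw
    hb.continuous.aestronglyMeasurable hB hbc z
  rw [← neg_inj, neg_sub, ← intervalIntegral.integral_neg,
    intervalIntegral.integral_eq_sub_of_hasDerivAt
      (fun t _ => hasDerivAt_integral_translate_mul_of_contDiff hw hb hbc z t)
      (hcont.neg.intervalIntegrable 0 s)]
  simp

lemma integral_translate_mul_sub (hw : HasWeakGrad f f') (ham : AEStronglyMeasurable a)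
    (hA : ∀ x, |a x| ≤ A) (hac : HasCompactSupport a) (z : En n) (s : ℝ) :
    ∫ t in 0..s, ∫ x, a (x + t • z) * ⟪z, f' x⟫ =
      (∫ x, a x * f x) - ∫ x, a (x + s • z) * f x := by
  set b := fun j => mollify (stdMollifier (En n) j) a
  set S := Metric.cthickening 1 (tsupport a)
  have hS : IsCompact S := hac.isCompact.cthickening
  have hb (j : ℕ) : ContDiff ℝ ∞ (b j) :=
    contDiff_mollify _ (locallyIntegrable_of_norm_le ham hA)
  have hbA (j : ℕ) (x : En n) : |b j x| ≤ A := abs_mollify_le _ ham hA x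
  have hbS (j : ℕ) (x : En n) : x ∉ S → b j x = 0 := mollify_stdMollifier_eq_zero a j
  have hbc (j : ℕ) : HasCompactSupport (b j) := HasCompactSupport.intro hS (hbS j)
  have hlim {v : En n → ℝ} (hv : LocallyIntegrable v) (w : En n) :
      Tendsto (fun j => ∫ x, b j (x + w) * v x) atTop (𝓝 (∫ x, a (x + w) * v x)) :=
    tendsto_integral_mollify_translate_mul ham hA hac hv w
  have hrhs : Tendsto (fun j => (∫ x, b j x * f x) - ∫ x, b j (x + s • z) * f x) atTop
      (𝓝 ((∫ x, a x * f x) - ∫ x, a (x + s • z) * f x)) := by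
    simpa only [add_zero] using (hlim hw.1 0).sub (hlim hw.1 (s • z))
  refine tendsto_nhds_unique ?_ (hrhs.congr fun j =>
    (integral_translate_mul_sub_of_contDiff hw ((hb j).of_le (by simp)) (hbc j) z s).symm)
  set u := (Metric.cthickening (|s| * ‖z‖) S).indicator fun x => ⟪z, f' x⟫
  refine intervalIntegral.tendsto_integral_filter_of_dominated_convergence
    (fun _ => ∫ x, A * |u x|) (Eventually.of_forall fun j =>
      (continuous_integral_translate_smul_mul_inner hw (hb j).continuous.aestronglyMeasurable
        (hbA j) (hbc j) z).aestronglyMeasurable)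
    (Eventually.of_forall fun j => Eventually.of_forall fun t ht => ?_)
    intervalIntegrable_const
    (Eventually.of_forall fun t _ => hlim (hw.locallyIntegrable_inner z) (t • z))
  refine norm_integral_le_of_norm_le ((integrable_indicator_cthickening hS
    (hw.locallyIntegrable_inner z) _).abs.const_mul A) (Eventually.of_forall fun x => ?_)
  refine abs_translate_mul_le (hbS j) (hbA j) (fun x => ⟪z, f' x⟫) ?_ x
  have hts : |t| ≤ |s| := by simpa using abs_sub_left_of_mem_uIcc (uIoc_subset_uIcc ht)
  rw [norm_smul, Real.norm_eq_abs]
  gcongr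

lemma abs_integral_mul_sub_translate_le (hw : HasWeakGrad f f') (ham : AEStronglyMeasurable a)
    (hA : ∀ x, |a x| ≤ A) (hac : HasCompactSupport a) {z : En n} {m : En n → ℝ}
    (hm : ∀ x y, ‖x - y‖ ≤ ‖z‖ → |a x| ≤ m y) (hmi : Integrable fun y => m y * ‖f' y‖) :
    |(∫ x, a x * f x) - ∫ x, a (x + z) * f x| ≤ ‖z‖ * ∫ y, m y * ‖f' y‖ := by
  have hkey := integral_translate_mul_sub hw ham hA hac z 1
  rw [one_smul] at hkey
  rw [← hkey, ← Real.norm_eq_abs]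
  refine (intervalIntegral.norm_integral_le_of_norm_le_const
    (C := ‖z‖ * ∫ y, m y * ‖f' y‖) fun t ht => ?_).trans_eq (by simp)
  rw [uIoc_of_le zero_le_one] at ht
  rw [← integral_const_mul]
  refine norm_integral_le_of_norm_le (hmi.const_mul _) (Eventually.of_forall fun y => ?_)
  have hay : |a (y + t • z)| ≤ m y := by
    refine hm _ y ?_
    rw [add_sub_cancel_left, norm_smul, Real.norm_of_nonneg ht.1.le]
    exact mul_le_of_le_one_left (norm_nonneg z) ht.2
  calc ‖a (y + t • z) * ⟪z, f' y⟫‖ = |a (y + t • z)| * ‖⟪z, f' y⟫‖ := norm_mul _ _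
    _ ≤ m y * (‖z‖ * ‖f' y‖) := mul_le_mul hay (norm_inner_le_norm z (f' y)) (norm_nonneg _)
        ((abs_nonneg _).trans hay)
    _ = ‖z‖ * (m y * ‖f' y‖) := by ring

lemma hasDerivAt_integral_translate_mul_zero (hw : HasWeakGrad f f')
    (ham : AEStronglyMeasurable a) (hA : ∀ x, |a x| ≤ A) (hac : HasCompactSupport a) (z : En n) :
    HasDerivAt (fun s : ℝ => ∫ x, a (x + s • z) * f x) (-∫ x, a x * ⟪z, f' x⟫) 0 := by
  have hcont := continuous_integral_translate_smul_mul_inner hw ham hA hac z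
  have := (hcont.integral_hasStrictDerivAt 0 0).hasDerivAt.const_sub (∫ x, a x * f x)
  simpa only [integral_translate_mul_sub hw ham hA hac, sub_sub_cancel, zero_smul, add_zero]
    using this

-- Translating the indicator of `A` cannot decrease the integral of `f` from its value zero.
lemma setIntegral_weakGrad_eq_zero (hw : HasWeakGrad f f') (hf₀ : ∀ x, 0 ≤ f x)
    {A : Set (En n)} (hAm : MeasurableSet A) (hAb : Bornology.IsBounded A)
    (hfA : ∀ᵐ x, x ∈ A → f x = 0) : ∫ x in A, f' x = 0 := by
  set a : En n → ℝ := A.indicator 1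
  have ha (v : En n → ℝ) : ∫ x, a x * v x = ∫ x in A, v x := by
    simp only [a, ← integral_indicator hAm, ← indicator_mul_left A, Pi.one_apply, one_mul]
  have hder (z : En n) := hasDerivAt_integral_translate_mul_zero hw
    (a := a) (A := 1) (aestronglyMeasurable_one.indicator hAm)
    (fun x => by by_cases hx : x ∈ A <;> simp [a, hx])
    (HasCompactSupport.intro hAb.isCompact_closure fun x hx =>
      indicator_of_notMem (fun h => hx (subset_closure h)) _) z
  have hmin (z : En n) : IsLocalMin (fun s : ℝ => ∫ x, a (x + s • z) * f x) 0 := by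
    refine Eventually.of_forall fun s => ?_
    have hzero : ∫ x in A, f x = 0 := setIntegral_eq_zero_of_ae_eq_zero hfA
    simp only [zero_smul, add_zero, ha, hzero]
    exact integral_nonneg fun x => mul_nonneg (indicator_nonneg (by simp) _) (hf₀ x)
  have hint : IntegrableOn f' A :=
    (hw.2.1.integrableOn_isCompact hAb.isCompact_closure).mono_set subset_closure
  refine ext_inner_left ℝ fun z => ?_
  rw [← integral_inner hint, inner_zero_right, ← ha, ← neg_eq_zero]
  exact (hmin z).hasDerivAt_eq_zero (hder z)

lemma weakGrad_ae_eq_zero_of_eq_zero (hw : HasWeakGrad f f') (hf₀ : ∀ x, 0 ≤ f x) :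
    ∀ᵐ x, f x = 0 → f' x = 0 := by
  set f₁ := hw.1.aestronglyMeasurable.mk f
  have hf₁ : f =ᵐ[volume] f₁ := hw.1.aestronglyMeasurable.ae_eq_mk
  set Z := f₁ ⁻¹' {0}
  have hZ : MeasurableSet Z :=
    hw.1.aestronglyMeasurable.stronglyMeasurable_mk.measurable (measurableSet_singleton 0)
  have hzero : ∀ᵐ x, Z.indicator f' x = 0 := by
    refine ae_eq_zero_of_forall_setIntegral_isCompact_eq_zero' (hw.2.1.indicator hZ)
      fun K hK => ?_
    rw [setIntegral_indicator hZ]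
    refine setIntegral_weakGrad_eq_zero hw hf₀ (hK.measurableSet.inter hZ)
      (hK.isBounded.subset inter_subset_left) ?_
    filter_upwards [hf₁] with x hx hxA using hx.trans hxA.2
  filter_upwards [hzero, hf₁] with x hx hxf hfx
  rwa [indicator_of_mem (show x ∈ Z from hxf.symm.trans hfx)] at hx

end WeakGradient

/-! ### The commutator estimate -/

section Commutator

lemma integrable_fst_mul_of_bounded_support {X Y : Type*} [MeasurableSpace X] [MeasurableSpace Y]
    {μ : Measure X} {ν : Measure Y} [SFinite μ] [SFinite ν] {u : X → ℝ} {κ : X × Y → ℝ} {A : ℝ}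
    {S : Set X} {T : Set Y} (hu : IntegrableOn u S μ) (hT : ν T ≠ ⊤)
    (hκm : AEStronglyMeasurable κ (μ.prod ν)) (hκ : ∀ q, |κ q| ≤ A)
    (hκS : ∀ q ∉ S ×ˢ T, κ q = 0) : Integrable (fun q => u q.1 * κ q) (μ.prod ν) := by
  have : Fact (ν T < ⊤) := ⟨hT.lt_top⟩
  have hint : IntegrableOn (fun q => u q.1 * κ q) (S ×ˢ T) (μ.prod ν) :=
    Integrable.mul_bdd (Measure.prod_restrict (μ := μ) (ν := ν) S T ▸ hu.comp_fst _)
      hκm.restrict (Eventually.of_forall hκ)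
  exact hint.integrable_of_forall_notMem_eq_zero fun q hq => by rw [hκS q hq, mul_zero]

lemma integrable_snd_mul_of_bounded_support {X Y : Type*} [MeasurableSpace X] [MeasurableSpace Y]
    {μ : Measure X} {ν : Measure Y} [SFinite μ] [SFinite ν] {u : Y → ℝ} {κ : X × Y → ℝ} {A : ℝ}
    {S : Set X} {T : Set Y} (hu : IntegrableOn u T ν) (hS : μ S ≠ ⊤)
    (hκm : AEStronglyMeasurable κ (μ.prod ν)) (hκ : ∀ q, |κ q| ≤ A)
    (hκS : ∀ q ∉ S ×ˢ T, κ q = 0) : Integrable (fun q => u q.2 * κ q) (μ.prod ν) :=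
  (integrable_fst_mul_of_bounded_support hu hS hκm.prod_swap (fun q => hκ q.swap)
    fun q hq => hκS q.swap fun h => hq h.symm).swap

section Kernel

variable {E : Type*} [NormedAddCommGroup E] [NormedSpace ℝ E] [FiniteDimensional ℝ E]
  [MeasureSpace E]

/-- The integrand `(x, y) ↦ ∂_{p(x)} ρ (x - y) h(y)`, where `ρ` is the normalized bump `φ`. Its
integral in `y` is the derivative of `mollify φ h` along `p`, its integral in `x` is
`-h div (mollify φ p)`. -/
def gradKernel (φ : ContDiffBump (0 : E)) (p : E → E) (h : E → ℝ) (q : E × E) : ℝ :=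
  fderiv ℝ (φ.normed volume) (q.1 - q.2) (p q.1) * h q.2

variable (φ : ContDiffBump (0 : E)) {p : E → E} {h : E → ℝ}

variable [BorelSpace E]

lemma aestronglyMeasurable_gradKernel (hp : AEStronglyMeasurable p)
    (hh : AEStronglyMeasurable h) :
    AEStronglyMeasurable (gradKernel φ p h) ((volume : Measure E).prod volume) := by
  have hker : AEStronglyMeasurable (fun q : E × E => fderiv ℝ (φ.normed volume) (q.1 - q.2))
      ((volume : Measure E).prod volume) :=
    ((continuous_fderiv_normed φ).comp (continuous_fst.sub continuous_snd)).aestronglyMeasurable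
  exact ((ContinuousLinearMap.apply ℝ ℝ).aestronglyMeasurable_comp₂ hp.comp_fst hker).mul
    hh.comp_snd

variable [(volume : Measure E).IsAddHaarMeasure]

lemma gradKernel_eq_zero {S : Set E} (hp : ∀ x ∉ S, p x = 0) {q : E × E}
    (hq : q ∉ S ×ˢ Metric.cthickening φ.rOut S) : gradKernel φ p h q = 0 := by
  by_cases hx : q.1 ∈ S
  · have hr : φ.rOut < ‖q.1 - q.2‖ := by
      by_contra! hle
      refine hq ⟨hx, Metric.mem_cthickening_of_dist_le q.2 q.1 _ S hx ?_⟩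
      rwa [dist_comm, dist_eq_norm]
    rw [gradKernel, fderiv_normed_eq_zero φ hr, zero_apply, zero_mul]
  · rw [gradKernel, hp _ hx, map_zero, zero_mul]

lemma exists_abs_gradKernel_le {P M : ℝ} (hP : ∀ x, ‖p x‖ ≤ P) (hM : ∀ x, |h x| ≤ M) :
    ∃ A, ∀ q, |gradKernel φ p h q| ≤ A := by
  obtain ⟨B, hB⟩ := (hasCompactSupport_fderiv_normed φ).exists_bound_of_continuous
    (continuous_fderiv_normed φ)
  refine ⟨B * P * M, fun q => ?_⟩
  have hdir : |fderiv ℝ (φ.normed volume) (q.1 - q.2) (p q.1)| ≤ B * P :=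
    ContinuousLinearMap.le_of_opNorm_le_of_le _ (hB _) (hP _)
  rw [gradKernel, abs_mul]
  exact mul_le_mul hdir (hM _) (abs_nonneg _) ((abs_nonneg _).trans hdir)

lemma integral_gradKernel_right (hh : LocallyIntegrable h) (x : E) :
    ∫ y, gradKernel φ p h (x, y) = fderiv ℝ (mollify φ h) x (p x) :=
  (fderiv_mollify_apply φ hh x (p x)).symm

end Kernel

variable {n : ℕ} {f : En n → ℝ} {f' : En n → En n} (φ : ContDiffBump (0 : En n))
  {p : En n → En n} {h : En n → ℝ} {P M : ℝ}

lemma integral_gradKernel_left (hp : LocallyIntegrable p) (y : En n) :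
    ∫ x, gradKernel φ p h (x, y) = -(h y * dvg (mollify φ p) y) := by
  have hodd (x : En n) : fderiv ℝ (φ.normed volume) (x - y) (p x) =
      -fderiv ℝ (φ.normed volume) (y - x) (p x) := by
    rw [← neg_sub, fderiv_normed_neg, neg_apply]
  simp only [gradKernel, hodd, dvg_mollify φ hp]
  rw [integral_mul_const, integral_neg, neg_mul, mul_comm]

lemma integrable_mul_gradKernel {u : En n → ℝ} (hu : LocallyIntegrable u)
    (hpm : AEStronglyMeasurable p) (hP : ∀ x, ‖p x‖ ≤ P) (hpc : HasCompactSupport p)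
    (hhm : AEStronglyMeasurable h) (hM : ∀ x, |h x| ≤ M) :
    Integrable (fun q => u q.1 * gradKernel φ p h q) ((volume : Measure (En n)).prod volume) ∧
      Integrable (fun q => u q.2 * gradKernel φ p h q)
        ((volume : Measure (En n)).prod volume) := by
  obtain ⟨A, hA⟩ := exists_abs_gradKernel_le φ hP hM
  have hm := aestronglyMeasurable_gradKernel φ hpm hhm
  have hS (q : En n × En n) : q ∉ tsupport p ×ˢ Metric.cthickening φ.rOut (tsupport p) →
      gradKernel φ p h q = 0 :=
    gradKernel_eq_zero φ fun x => image_eq_zero_of_notMem_tsupport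
  have hc := hpc.isCompact
  exact ⟨integrable_fst_mul_of_bounded_support (hu.integrableOn_isCompact hc)
      hc.cthickening.measure_ne_top hm hA hS,
    integrable_snd_mul_of_bounded_support (hu.integrableOn_isCompact hc.cthickening)
      hc.measure_ne_top hm hA hS⟩

lemma integral_sub_mul_gradKernel (hf : LocallyIntegrable f)
    (hpm : AEStronglyMeasurable p) (hP : ∀ x, ‖p x‖ ≤ P) (hpc : HasCompactSupport p)
    (hhm : AEStronglyMeasurable h) (hM : ∀ x, |h x| ≤ M) :
    ∫ q, (f q.1 - f q.2) * gradKernel φ p h q ∂((volume : Measure (En n)).prod volume) =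
      (∫ x, f x * fderiv ℝ (mollify φ h) x (p x)) + ∫ y, h y * (f y * dvg (mollify φ p) y) := by
  obtain ⟨hfst, hsnd⟩ := integrable_mul_gradKernel φ hf hpm hP hpc hhm hM
  simp only [sub_mul]
  rw [integral_sub hfst hsnd, integral_prod _ hfst, integral_prod_symm _ hsnd]
  simp only [integral_const_mul, integral_gradKernel_right φ (locallyIntegrable_of_norm_le hhm hM),
    integral_gradKernel_left φ (locallyIntegrable_of_norm_le hpm hP)]
  simp only [mul_neg, integral_neg, sub_neg_eq_add, mul_left_comm]

lemma abs_integral_translate_sub_mul_le (hw : HasWeakGrad f f') (hpm : AEStronglyMeasurable p)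
    (hP : ∀ x, ‖p x‖ ≤ P) (hpc : HasCompactSupport p) (hhm : AEStronglyMeasurable h)
    (hM : ∀ x, |h x| ≤ M) {z : En n} {m : En n → ℝ} (hm : ∀ x y, ‖x - y‖ ≤ ‖z‖ → ‖p x‖ ≤ m y)
    (hmi : Integrable fun y => m y * ‖f' y‖) (D : En n →L[ℝ] ℝ) :
    |∫ y, (f (y + z) - f y) * (D (p (y + z)) * h y)| ≤
      ‖D‖ * (‖z‖ * (M * ∫ y, m y * ‖f' y‖)) := by
  have hM₀ : 0 ≤ M := (abs_nonneg _).trans (hM 0)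
  set a : En n → ℝ := fun x => D (p x) * h (x - z)
  have ham : AEStronglyMeasurable a := (D.continuous.comp_aestronglyMeasurable hpm).mul
    (hhm.comp_quasiMeasurePreserving
      (measurePreserving_sub_right volume z).quasiMeasurePreserving)
  have ha (x : En n) : |a x| ≤ ‖D‖ * M * ‖p x‖ := by
    rw [abs_mul, mul_right_comm]
    exact mul_le_mul (D.le_opNorm _) (hM _) (abs_nonneg _) (by positivity)
  have haP (x : En n) : |a x| ≤ ‖D‖ * M * P := (ha x).trans (by gcongr; exact hP x)
  have hac : HasCompactSupport a := HasCompactSupport.intro hpc fun x hx => by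
    simp [a, image_eq_zero_of_notMem_tsupport hx]
  have hint : Integrable fun x => a x * f x := by
    simpa using integrable_translate_mul ham haP hac hw.1 0
  have hsplit : ∫ y, (f (y + z) - f y) * (D (p (y + z)) * h y) =
      (∫ x, a x * f x) - ∫ x, a (x + z) * f x := by
    rw [← integral_add_right_eq_self (fun x => a x * f x) z,
      ← integral_sub (hint.comp_add_right z) (integrable_translate_mul ham haP hac hw.1 z)]
    simp only [a, add_sub_cancel_right, sub_mul, mul_comm (f _)]
  rw [hsplit]
  refine (abs_integral_mul_sub_translate_le hw ham haP hac (m := fun y => ‖D‖ * M * m y)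
    (fun x y hxy => (ha x).trans (by gcongr; exact hm x y hxy))
    (by simpa only [mul_assoc] using hmi.const_mul (‖D‖ * M))).trans_eq ?_
  simp only [mul_assoc, integral_const_mul]
  ring

lemma abs_integral_sub_mul_gradKernel_le (hw : HasWeakGrad f f') (hpm : AEStronglyMeasurable p)
    (hP : ∀ x, ‖p x‖ ≤ P) (hpc : HasCompactSupport p) (hhm : AEStronglyMeasurable h)
    (hM : ∀ x, |h x| ≤ M) {m : En n → ℝ} (hm : ∀ x y, ‖x - y‖ ≤ φ.rOut → ‖p x‖ ≤ m y)
    (hmi : Integrable fun y => m y * ‖f' y‖) :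
    |∫ q, (f q.1 - f q.2) * gradKernel φ p h q ∂((volume : Measure (En n)).prod volume)| ≤
      bumpGradConst φ * M * ∫ y, m y * ‖f' y‖ := by
  set F : En n × En n → ℝ := fun q => (f q.1 - f q.2) * gradKernel φ p h q
  set I := ∫ y, m y * ‖f' y‖
  obtain ⟨hfst, hsnd⟩ := integrable_mul_gradKernel φ hw.1 hpm hP hpc hhm hM
  have hF : Integrable F ((volume : Measure (En n)).prod volume) := by
    simp only [F, sub_mul]
    exact hfst.sub hsnd
  have hshear : Integrable (fun q : En n × En n => F (q.1 + q.2, q.1))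
      ((volume : Measure (En n)).prod volume) :=
    (measurePreserving_prod_add volume volume).integrable_comp_of_integrable hF.swap
  have hMI : 0 ≤ M * I := mul_nonneg ((abs_nonneg _).trans (hM 0)) <|
    integral_nonneg fun y => mul_nonneg
      ((norm_nonneg _).trans (hm y y (by simpa using φ.rOut_pos.le))) (norm_nonneg _)
  have hslice (z : En n) :
      |∫ y, F (y + z, y)| ≤ ‖fderiv ℝ (φ.normed volume) z‖ * (φ.rOut * (M * I)) := by
    simp only [F, gradKernel, add_sub_cancel_left]
    rcases lt_or_ge φ.rOut ‖z‖ with hz | hz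
    · simp [fderiv_normed_eq_zero φ hz]
    · exact (abs_integral_translate_sub_mul_le hw hpm hP hpc hhm hM
        (fun x y hxy => hm x y (hxy.trans hz)) hmi _).trans (by gcongr)
  have hswap : ∫ q, F q ∂((volume : Measure (En n)).prod volume) = ∫ z, ∫ y, F (y + z, y) := by
    rw [integral_prod_symm _ hF,
      ← integral_integral_swap (f := fun y z => F (y + z, y)) hshear]
    exact integral_congr_ae (Eventually.of_forall fun y =>
      (integral_add_left_eq_self (fun x => F (x, y)) y).symm)
  rw [hswap, ← Real.norm_eq_abs]
  refine (norm_integral_le_of_norm_le ((integrable_fderiv_normed φ).norm.mul_const _)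
    (Eventually.of_forall hslice)).trans_eq ?_
  rw [integral_mul_const, bumpGradConst]
  ring

theorem neg_integral_mul_fderiv_mollify_le (hw : HasWeakGrad f f')
    (hpm : AEStronglyMeasurable p) (hP : ∀ x, ‖p x‖ ≤ P) (hpc : HasCompactSupport p)
    (hhm : AEStronglyMeasurable h) (hM : ∀ x, |h x| ≤ M) {m : En n → ℝ}
    (hm : ∀ x y, ‖x - y‖ ≤ φ.rOut → ‖p x‖ ≤ m y) (hmi : Integrable fun y => m y * ‖f' y‖) :
    -∫ x, f x * fderiv ℝ (mollify φ h) x (p x) ≤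
      (∫ y, h y * weakDiv f f' (mollify φ p) y) +
        (1 + bumpGradConst φ) * M * ∫ y, m y * ‖f' y‖ := by
  set ψ := mollify φ p
  have hψ : ContDiff ℝ 1 ψ :=
    (contDiff_mollify φ (locallyIntegrable_of_norm_le hpm hP)).of_le (by simp)
  have hψc : HasCompactSupport ψ := hasCompactSupport_mollify φ hpc
  have hψm (y : En n) : ‖ψ y‖ ≤ m y :=
    norm_mollify_le φ hpm fun x hx => hm x y (norm_sub_rev y x ▸ hx.le)
  have hM' : ∀ᵐ y, ‖h y‖ ≤ M := Eventually.of_forall hM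
  have hinner : |∫ y, h y * ⟪ψ y, f' y⟫| ≤ M * ∫ y, m y * ‖f' y‖ := by
    rw [← integral_const_mul, ← Real.norm_eq_abs]
    refine norm_integral_le_of_norm_le (hmi.const_mul M) (Eventually.of_forall fun y => ?_)
    rw [norm_mul]
    exact mul_le_mul (hM y)
      ((norm_inner_le_norm (ψ y) (f' y)).trans (by gcongr; exact hψm y)) (norm_nonneg _)
      ((abs_nonneg _).trans (hM y))
  have hcomm := abs_integral_sub_mul_gradKernel_le φ hw hpm hP hpc hhm hM hm hmi
  rw [integral_sub_mul_gradKernel φ hw.1 hpm hP hpc hhm hM] at hcomm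
  have hsplit : ∫ y, h y * weakDiv f f' ψ y =
      (∫ y, h y * (f y * dvg ψ y)) + ∫ y, h y * ⟪ψ y, f' y⟫ := by
    simp only [weakDiv, mul_add]
    exact integral_add ((integrable_mul_dvg hw.1 hψ hψc).bdd_mul hhm hM')
      ((integrable_inner_of_hasCompactSupport hw.2.1 hψ.continuous hψc).bdd_mul hhm hM')
  rw [hsplit]
  linarith [abs_le.1 hcomm, abs_le.1 hinner]

end Commutator

/-! ### Local approximation -/

section LocalApproximation

section ConstancySets

variable {E F : Type*} [PseudoMetricSpace E] {h : E → F}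

/-- The union of all open sets on which `h` is constant. -/
def locConst {E F : Type*} [TopologicalSpace E] (h : E → F) : Set E :=
  ⋃₀ {O : Set E | IsOpen O ∧ ∃ c : F, ∀ x ∈ O, h x = c}

lemma isOpen_locConst {E F : Type*} [TopologicalSpace E] (h : E → F) : IsOpen (locConst h) :=
  isOpen_sUnion fun _ hO => hO.1

/-- The centres of the balls of radius `r` on which `h` is constant: a quantitative version of
`locConst h`. -/
def constBall (h : E → F) (r : ℝ) : Set E :=
  {x | ∃ c, ∀ y ∈ Metric.ball x r, h y = c}

lemma constBall_subset_locConst {r : ℝ} (hr : 0 < r) : constBall h r ⊆ locConst h :=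
  fun x ⟨c, hc⟩ => ⟨Metric.ball x r, ⟨Metric.isOpen_ball, c, hc⟩, Metric.mem_ball_self hr⟩

lemma mem_constBall_of_dist_le {r s : ℝ} {x y : E} (hy : y ∈ constBall h s)
    (hxy : r + dist x y ≤ s) : x ∈ constBall h r :=
  let ⟨c, hc⟩ := hy
  ⟨c, fun z hz => hc z (Metric.ball_subset_ball' hxy hz)⟩

lemma eventually_mem_constBall {x : E} (hx : x ∈ locConst h) :
    ∀ᶠ r in 𝓝 (0 : ℝ), x ∈ constBall h r := by
  obtain ⟨O, ⟨hO, c, hc⟩, hxO⟩ := hx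
  obtain ⟨s, hs, hsO⟩ := Metric.isOpen_iff.1 hO x hxO
  filter_upwards [gt_mem_nhds hs] with r hr
  exact ⟨c, fun y hy => hc y (hsO (Metric.ball_subset_ball hr.le hy))⟩

lemma isClosed_constBall (h : E → F) (r : ℝ) : IsClosed (constBall h r) := by
  have heq : constBall h r =
      {x | ∀ y z, y ∈ Metric.ball x r → z ∈ Metric.ball x r → h y = h z} := by
    ext x
    refine ⟨fun ⟨c, hc⟩ y z hy hz => (hc y hy).trans (hc z hz).symm, fun hx => ?_⟩
    exact ⟨h x, fun y hy => hx y x hy (Metric.mem_ball_self (Metric.pos_of_mem_ball hy))⟩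
  simp only [heq, ofPred_forall, Metric.mem_ball, imp_iff_not_or, not_lt]
  refine isClosed_iInter fun y => isClosed_iInter fun z => ?_
  exact (isClosed_le continuous_const (continuous_const.dist continuous_id)).union
    ((isClosed_le continuous_const (continuous_const.dist continuous_id)).union
      isClosed_const)

lemma tendsto_setIntegral_compl_constBall [MeasurableSpace E] [BorelSpace E] {μ : Measure E}
    {u : E → ℝ} (hu : Integrable u μ) (h : E → F) :
    Tendsto (fun r => ∫ x in (constBall h r)ᶜ, u x ∂μ) (𝓝[>] 0)
      (𝓝 (∫ x in (locConst h)ᶜ, u x ∂μ)) := by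
  have hm (r : ℝ) : MeasurableSet (constBall h r)ᶜ := (isClosed_constBall h r).measurableSet.compl
  simp only [← integral_indicator (hm _),
    ← integral_indicator (isOpen_locConst h).measurableSet.compl]
  refine tendsto_integral_filter_of_dominated_convergence (fun x => ‖u x‖)
    (Eventually.of_forall fun r => (hu.indicator (hm r)).aestronglyMeasurable)
    (Eventually.of_forall fun r => Eventually.of_forall fun x => norm_indicator_le_norm_self _ _)
    hu.norm (Eventually.of_forall fun x => tendsto_const_nhds.congr' ?_)
  by_cases hx : x ∈ locConst h
  · filter_upwards [nhdsWithin_le_nhds (eventually_mem_constBall hx)] with r hr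
    rw [indicator_of_notMem (not_not.2 hx), indicator_of_notMem (not_not.2 hr)]
  · filter_upwards [self_mem_nhdsWithin] with r hr
    rw [indicator_of_mem (by exact hx),
      indicator_of_mem (by exact fun hc => hx (constBall_subset_locConst hr hc))]

end ConstancySets

section Mollification

variable {E : Type*} [NormedAddCommGroup E] [NormedSpace ℝ E] [FiniteDimensional ℝ E]
  [MeasureSpace E] [BorelSpace E] [(volume : Measure E).IsAddHaarMeasure]

lemma tendsto_integral_mul_abs_mollify_sub {u h : E → ℝ} {M : ℝ} (hu : Integrable u)
    (hhm : AEStronglyMeasurable h) (hM : ∀ x, |h x| ≤ M) :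
    Tendsto (fun j => ∫ x, u x * |mollify (stdMollifier E j) h x - h x|) atTop (𝓝 0) := by
  have hh : LocallyIntegrable h := locallyIntegrable_of_norm_le hhm hM
  rw [← integral_zero E ℝ]
  refine tendsto_integral_of_dominated_convergence (fun x => ‖u x‖ * (M + M)) (fun j => ?_)
    (hu.norm.mul_const _) (fun j => Eventually.of_forall fun x => ?_) ?_
  · exact hu.aestronglyMeasurable.mul
      ((contDiff_mollify _ hh).continuous.aestronglyMeasurable.sub hhm).norm
  · rw [norm_mul, Real.norm_eq_abs |_|, abs_abs]
    gcongr
    exact (abs_sub _ _).trans (add_le_add (abs_mollify_le _ hhm hM x) (hM x))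
  · filter_upwards [ae_tendsto_mollify_stdMollifier hh] with x hx
    simpa using ((hx.sub_const (h x)).abs).const_mul (u x)

end Mollification

variable {n : ℕ} {f : En n → ℝ} {f' : En n → En n} {U : Set (En n)} {h ζ : En n → ℝ} {M : ℝ}

lemma integrable_mul_norm_of_hasCompactSupport {u : En n → ℝ} {v : En n → En n}
    (hv : LocallyIntegrable v) (hu : Continuous u) (huc : HasCompactSupport u) :
    Integrable fun x => u x * ‖v x‖ := by
  refine (hv.integrable_smul_left_of_hasCompactSupport hu huc).mono
    (hu.aestronglyMeasurable.mul hv.aestronglyMeasurable.norm) (Eventually.of_forall fun x => ?_)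
  rw [norm_mul, norm_norm, norm_smul]

/-- The field `ζ φ`, cut off where `h` is constant on a ball of radius `r`. -/
def cutField (h ζ : En n → ℝ) (r : ℝ) (φ : En n → En n) : En n → En n :=
  (constBall h r)ᶜ.indicator fun x => ζ x • φ x

lemma cutField_eq_zero {r : ℝ} {φ : En n → En n} {x : En n}
    (hx : x ∈ constBall h r ∨ x ∉ tsupport ζ) : cutField h ζ r φ x = 0 := by
  rcases hx with hx | hx
  · exact indicator_of_notMem (not_not.2 hx) _
  · simp [cutField, image_eq_zero_of_notMem_tsupport hx]

lemma norm_cutField_le (hζ₀ : ∀ x, 0 ≤ ζ x) {φ : En n → En n} (hφ : ∀ x, ‖φ x‖ ≤ 1) (r : ℝ)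
    (x : En n) : ‖cutField h ζ r φ x‖ ≤ ζ x := by
  refine (norm_indicator_le_norm_self _ _).trans ?_
  rw [norm_smul, Real.norm_of_nonneg (hζ₀ x)]
  exact mul_le_of_le_one_right (hζ₀ x) (hφ x)

lemma aestronglyMeasurable_cutField (hζ : Continuous ζ) {φ : En n → En n} (hφ : Continuous φ)
    (r : ℝ) : AEStronglyMeasurable (cutField h ζ r φ) :=
  (hζ.smul hφ).aestronglyMeasurable.indicator (isClosed_constBall h r).measurableSet.compl

lemma hasCompactSupport_cutField (hζc : HasCompactSupport ζ) (r : ℝ) (φ : En n → En n) :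
    HasCompactSupport (cutField h ζ r φ) :=
  HasCompactSupport.intro hζc fun _ hx => cutField_eq_zero (Or.inr hx)

lemma fderiv_mollify_cutField {ρ : ContDiffBump (0 : En n)} {r : ℝ} (hr : ρ.rOut < r)
    (φ : En n → En n) (x : En n) :
    fderiv ℝ (mollify ρ h) x (cutField h ζ r φ x) = ζ x * fderiv ℝ (mollify ρ h) x (φ x) := by
  by_cases hx : x ∈ constBall h r
  · obtain ⟨c, hc⟩ := hx
    simp [fderiv_mollify_eq_zero ρ hr hc]
  · rw [cutField, indicator_of_mem (by exact hx), map_smul, smul_eq_mul]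

section Field

variable {ρ : ContDiffBump (0 : En n)} {η : ℝ} {φ : En n → En n}

lemma norm_mollify_cutField_le (hζ : Continuous ζ) (hζ₀ : ∀ x, 0 ≤ ζ x)
    (hη : ∀ x y, ‖x - y‖ ≤ ρ.rOut → |ζ x - ζ y| ≤ η) (hφ : Continuous φ) (hφ₁ : ∀ x, ‖φ x‖ ≤ 1)
    (r : ℝ) (y : En n) : ‖mollify ρ (cutField h ζ r φ) y‖ ≤ ζ y + η :=
  norm_mollify_le ρ (aestronglyMeasurable_cutField hζ hφ r) fun x hx => by
    linarith [norm_cutField_le (h := h) hζ₀ hφ₁ r x, (abs_le.1 (hη y x hx.le)).1]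

lemma norm_cutField_le_of_norm_sub_le (hζ₀ : ∀ x, 0 ≤ ζ x)
    (hη : ∀ x y, ‖x - y‖ ≤ ρ.rOut → |ζ x - ζ y| ≤ η) (hφ₁ : ∀ x, ‖φ x‖ ≤ 1) {x y : En n}
    (hxy : ‖x - y‖ ≤ ρ.rOut) :
    ‖cutField h ζ (2 * ρ.rOut) φ x‖ ≤ (constBall h (3 * ρ.rOut))ᶜ.indicator ζ y +
      (Metric.cthickening ρ.rOut (tsupport ζ)).indicator (fun _ => η) y := by
  have hη₀ : 0 ≤ η := (abs_nonneg _).trans (hη x y hxy)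
  by_cases hx : x ∈ constBall h (2 * ρ.rOut) ∨ x ∉ tsupport ζ
  · rw [cutField_eq_zero hx, norm_zero]
    exact add_nonneg (indicator_nonneg (fun y _ => hζ₀ y) y) (indicator_nonneg (fun _ _ => hη₀) y)
  · simp only [not_or, not_not] at hx
    have hyK : y ∈ Metric.cthickening ρ.rOut (tsupport ζ) :=
      Metric.mem_cthickening_of_dist_le y x _ _ hx.2 (by rwa [dist_comm, dist_eq_norm])
    have hyB : y ∈ (constBall h (3 * ρ.rOut))ᶜ := fun hc =>
      hx.1 (mem_constBall_of_dist_le hc (by rw [dist_eq_norm]; linarith))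
    rw [indicator_of_mem hyB, indicator_of_mem hyK]
    linarith [norm_cutField_le (h := h) hζ₀ hφ₁ (2 * ρ.rOut) x, (abs_le.1 (hη x y hxy)).2]

-- Cutting the field off where the mollification is stationary costs nothing and confines the
-- commutator error to the complement of `constBall h (3 * ρ.rOut)`.
lemma neg_integral_mul_cutoff_mul_fderiv_mollify_le (hw : HasWeakGrad f f') (hζ : Continuous ζ)
    (hζc : HasCompactSupport ζ) (hζ₀ : ∀ x, 0 ≤ ζ x)
    (hη : ∀ x y, ‖x - y‖ ≤ ρ.rOut → |ζ x - ζ y| ≤ η) (hφ : Continuous φ) (hφ₁ : ∀ x, ‖φ x‖ ≤ 1)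
    (hhm : AEStronglyMeasurable h) (hM : ∀ x, |h x| ≤ M) :
    -∫ x, f x * (ζ x * fderiv ℝ (mollify ρ h) x (φ x)) ≤
      (∫ y, h y * weakDiv f f' (mollify ρ (cutField h ζ (2 * ρ.rOut) φ)) y) +
        (1 + bumpGradConst ρ) * M * ((∫ y in (constBall h (3 * ρ.rOut))ᶜ, ζ y * ‖f' y‖) +
          η * ∫ y in Metric.cthickening ρ.rOut (tsupport ζ), ‖f' y‖) := by
  set K := Metric.cthickening ρ.rOut (tsupport ζ)
  set B := (constBall h (3 * ρ.rOut))ᶜ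
  have hB : MeasurableSet B := (isClosed_constBall h _).measurableSet.compl
  have hK : IsCompact K := hζc.isCompact.cthickening
  have hsplit : (fun y => (B.indicator ζ y + K.indicator (fun _ => η) y) * ‖f' y‖) =
      (B.indicator fun y => ζ y * ‖f' y‖) + K.indicator fun y => η * ‖f' y‖ := by
    ext y
    simp only [Pi.add_apply, add_mul, indicator_mul_left]
  have hBi : Integrable (B.indicator fun y => ζ y * ‖f' y‖) :=
    (integrable_mul_norm_of_hasCompactSupport hw.2.1 hζ hζc).indicator hB
  have hKi : Integrable (K.indicator fun y => η * ‖f' y‖) :=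
    (integrable_indicator_iff hK.measurableSet).2
      ((hw.2.1.integrableOn_isCompact hK).norm.const_mul η)
  have hmi : Integrable fun y => (B.indicator ζ y + K.indicator (fun _ => η) y) * ‖f' y‖ := by
    rw [hsplit]
    exact hBi.add hKi
  obtain ⟨P, hP⟩ := hζc.exists_bound_of_continuous hζ
  have hcomm := neg_integral_mul_fderiv_mollify_le ρ hw (aestronglyMeasurable_cutField hζ hφ _)
    (fun x => (norm_cutField_le hζ₀ hφ₁ _ x).trans ((le_abs_self _).trans (hP x)))
    (hasCompactSupport_cutField hζc (2 * ρ.rOut) φ) hhm hM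
    (fun x y => norm_cutField_le_of_norm_sub_le hζ₀ hη hφ₁) hmi
  have hr : ρ.rOut < 2 * ρ.rOut := by linarith [ρ.rOut_pos]
  simp only [fderiv_mollify_cutField hr] at hcomm
  have hint : ∫ y, (B.indicator ζ y + K.indicator (fun _ => η) y) * ‖f' y‖ =
      (∫ y in B, ζ y * ‖f' y‖) + η * ∫ y in K, ‖f' y‖ := by
    rw [hsplit, integral_add' hBi hKi, integral_indicator hB, integral_indicator hK.measurableSet,
      integral_const_mul]
  exact hcomm.trans_eq (by rw [← hint])

end Field

/-- The constant of the approximation theorem in dimension `n`. -/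
def approxConst (n : ℕ) : ℝ := 1 + bumpGradConst (stdMollifier (En n) 0)

lemma approxConst_nonneg (n : ℕ) : 0 ≤ approxConst n :=
  add_nonneg zero_le_one (bumpGradConst_nonneg _)

/-- `G` is a smooth approximation of `h` on the support of the cutoff `ζ`, with tolerance `η`. The
last condition says that the contribution of `ζ ∇G` to the variation is that of a field `Ψ` almost
bounded by `ζ`, tested against `h`, up to an error carried by the complement of `locConst h`. -/
structure IsLocalApprox (f : En n → ℝ) (f' : En n → En n) (U : Set (En n)) (h : En n → ℝ) (M : ℝ)
    (ζ : En n → ℝ) (η : ℝ) (G : En n → ℝ) : Prop where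
  contDiff : ContDiff ℝ ∞ G
  abs_le (x : En n) : |G x| ≤ M
  integral_le : ∫ x, f x * (‖fderiv ℝ ζ x‖ + ζ x) * |G x - h x| ≤ η
  exists_field {φ : En n → En n} (hφ : Continuous φ) (hφ₁ : ∀ x, ‖φ x‖ ≤ 1) :
    ∃ Ψ : En n → En n, ContDiff ℝ 1 Ψ ∧ HasCompactSupport Ψ ∧ tsupport Ψ ⊆ U ∧
      (∀ y, ‖Ψ y‖ ≤ ζ y + η) ∧
      -∫ x, f x * (ζ x * fderiv ℝ G x (φ x)) ≤ (∫ y, h y * weakDiv f f' Ψ y) +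
        approxConst n * M * ((∫ y in (locConst h)ᶜ, ζ y * ‖f' y‖) + η)

lemma integrable_mul_norm_fderiv_add (hf : LocallyIntegrable f) (hζ : ContDiff ℝ 1 ζ)
    (hζc : HasCompactSupport ζ) : Integrable fun x => f x * (‖fderiv ℝ ζ x‖ + ζ x) :=
  hf.integrable_smul_right_of_hasCompactSupport
    ((hζ.continuous_fderiv one_ne_zero).norm.add hζ.continuous) ((hζc.fderiv ℝ).norm.add hζc)

lemma tendsto_rOut_stdMollifier (E : Type*) [NormedAddCommGroup E] :
    Tendsto (fun j => (stdMollifier E j).rOut) atTop (𝓝[>] 0) :=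
  tendsto_nhdsWithin_iff.2 ⟨tendsto_one_div_add_atTop_nhds_zero_nat,
    Eventually.of_forall fun j => (stdMollifier E j).rOut_pos⟩

lemma isLocalApprox_mollify (hw : HasWeakGrad f f') (hhm : AEStronglyMeasurable h)
    (hM : ∀ x, |h x| ≤ M) (hζ : ContDiff ℝ 1 ζ) (hζc : HasCompactSupport ζ) (hζ₀ : ∀ x, 0 ≤ ζ x)
    {j : ℕ} {δ η η' : ℝ} (hδ : (stdMollifier (En n) j).rOut = δ)
    (hη' : ∀ x y, ‖x - y‖ ≤ δ → |ζ x - ζ y| ≤ η') (hη'η : η' ≤ η)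
    (hδU : Metric.cthickening δ (tsupport ζ) ⊆ U)
    (hL : ∫ x, f x * (‖fderiv ℝ ζ x‖ + ζ x) * |mollify (stdMollifier (En n) j) h x - h x| ≤ η)
    (hI : (∫ y in (constBall h (3 * δ))ᶜ, ζ y * ‖f' y‖) +
      η' * (∫ y in Metric.cthickening δ (tsupport ζ), ‖f' y‖) ≤
        (∫ y in (locConst h)ᶜ, ζ y * ‖f' y‖) + η) :
    IsLocalApprox f f' U h M ζ η (mollify (stdMollifier (En n) j) h) where
  contDiff := contDiff_mollify _ (locallyIntegrable_of_norm_le hhm hM)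
  abs_le := abs_mollify_le _ hhm hM
  integral_le := hL
  exists_field {φ} hφ hφ₁ := by
    subst hδ
    set ρ := stdMollifier (En n) j
    have hpc := hasCompactSupport_cutField (h := h) hζc (2 * ρ.rOut) φ
    have hpl : LocallyIntegrable (cutField h ζ (2 * ρ.rOut) φ) := by
      obtain ⟨P, hP⟩ := hζc.exists_bound_of_continuous hζ.continuous
      exact locallyIntegrable_of_norm_le (aestronglyMeasurable_cutField hζ.continuous hφ _)
        fun x => (norm_cutField_le hζ₀ hφ₁ _ x).trans ((le_abs_self _).trans (hP x))
    refine ⟨mollify ρ (cutField h ζ (2 * ρ.rOut) φ), (contDiff_mollify ρ hpl).of_le (by simp),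
      hasCompactSupport_mollify ρ hpc,
      (tsupport_mollify_subset ρ fun x hx => cutField_eq_zero (Or.inr hx)).trans hδU, fun y =>
      (norm_mollify_cutField_le hζ.continuous hζ₀ hη' hφ hφ₁ _ y).trans (by gcongr), ?_⟩
    refine (neg_integral_mul_cutoff_mul_fderiv_mollify_le hw hζ.continuous hζc hζ₀ hη' hφ hφ₁
      hhm hM).trans ?_
    rw [bumpGradConst_stdMollifier, ← approxConst]
    have hM₀ : 0 ≤ M := (abs_nonneg _).trans (hM 0)
    have hC := approxConst_nonneg n
    gcongr

lemma exists_isLocalApprox (hw : HasWeakGrad f f') (hU : IsOpen U)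
    (hhm : AEStronglyMeasurable h) (hM : ∀ x, |h x| ≤ M) (hζ : ContDiff ℝ 1 ζ)
    (hζc : HasCompactSupport ζ) (hζU : tsupport ζ ⊆ U) (hζ₀ : ∀ x, 0 ≤ ζ x) {η : ℝ}
    (hη : 0 < η) : ∃ G, IsLocalApprox f f' U h M ζ η G := by
  obtain ⟨d, hd, hdU⟩ := IsCompact.exists_cthickening_subset_open hζc hU hζU
  set A := ∫ y in Metric.cthickening d (tsupport ζ), ‖f' y‖
  obtain ⟨η', hη', hη'A, hη'η⟩ : ∃ η' > 0, A * η' < η / 2 ∧ η' ≤ η := by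
    obtain ⟨c, hc, hcA⟩ := exists_pos_mul_lt (half_pos hη) A
    refine ⟨min c η, lt_min hc hη, lt_of_le_of_lt ?_ hcA, min_le_right _ _⟩
    exact mul_le_mul_of_nonneg_left (min_le_left _ _) (integral_nonneg fun _ => norm_nonneg _)
  obtain ⟨s, hs, hsζ⟩ := Metric.uniformContinuous_iff_le.1
    (hζc.uniformContinuous_of_continuous hζ.continuous) η' hη'
  have hrad := tendsto_rOut_stdMollifier (En n)
  have hrad₃ : Tendsto (fun j => 3 * (stdMollifier (En n) j).rOut) atTop (𝓝[>] 0) := by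
    simpa only [mul_zero] using TendstoNhdsWithinIoi.const_mul three_pos hrad
  have hL := (tendsto_integral_mul_abs_mollify_sub (integrable_mul_norm_fderiv_add hw.1 hζ hζc)
    hhm hM).eventually (ge_mem_nhds hη)
  have hI := ((tendsto_setIntegral_compl_constBall
    (integrable_mul_norm_of_hasCompactSupport hw.2.1 hζ.continuous hζc) h).comp hrad₃).eventually
      (ge_mem_nhds (lt_add_of_pos_right _ (half_pos hη)))
  obtain ⟨j, hjL, hjI, hjs, hjd⟩ := (hL.and (hI.and ((hrad.eventually
    (nhdsWithin_le_nhds (ge_mem_nhds hs))).and (hrad.eventually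
      (nhdsWithin_le_nhds (ge_mem_nhds hd)))))).exists
  have hsub := Metric.cthickening_mono hjd (tsupport ζ)
  refine ⟨_, isLocalApprox_mollify hw hhm hM hζ hζc hζ₀ rfl (fun x y hxy => ?_) hη'η
    (hsub.trans hdU) hjL ?_⟩
  · rw [← Real.dist_eq]
    exact hsζ (by rw [dist_eq_norm]; exact hxy.trans hjs)
  · have hA : η' * (∫ y in Metric.cthickening (stdMollifier (En n) j).rOut (tsupport ζ), ‖f' y‖) ≤
        η' * A := mul_le_mul_of_nonneg_left (setIntegral_mono_set
          (hw.2.1.integrableOn_isCompact hζc.isCompact.cthickening).norm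
          (Eventually.of_forall fun _ => norm_nonneg _) hsub.eventuallyLE) hη'.le
    simp only [Function.comp_apply] at hjI
    linarith [mul_comm A η']

end LocalApproximation

/-! ### Partitions of unity -/

section LevelCutoff

variable {X : Type*} {w : X → ℝ}

/-- The `k`-th cutoff attached to a function `w`: it vanishes where `k w ≤ 1` and equals one where
`k w ≥ 2`. -/
def levelCutoff {X : Type*} (w : X → ℝ) (k : ℕ) (x : X) : ℝ := Real.smoothTransition (k * w x - 1)

lemma levelCutoff_eq_zero {k : ℕ} {x : X} (h : k * w x ≤ 1) : levelCutoff w k x = 0 :=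
  Real.smoothTransition.zero_of_nonpos (sub_nonpos.2 h)

lemma levelCutoff_eq_one {k : ℕ} {x : X} (h : 2 ≤ k * w x) : levelCutoff w k x = 1 :=
  Real.smoothTransition.one_of_one_le (by linarith)

lemma sum_levelCutoff_sub (w : X → ℝ) (N : ℕ) (x : X) :
    ∑ k ∈ Finset.range N, (levelCutoff w (k + 1) x - levelCutoff w k x) = levelCutoff w N x := by
  rw [Finset.sum_range_sub (levelCutoff w · x), levelCutoff_eq_zero (k := 0) (by simp),
    sub_zero]

lemma eventually_levelCutoff_eq_one [TopologicalSpace X] (hw : Continuous w) (hw₀ : ∀ x, 0 ≤ w x)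
    {K : Set X} (hK : IsCompact K) (hKw : ∀ x ∈ K, 0 < w x) :
    ∃ N, ∀ᶠ x in 𝓝ˢ K, ∀ k ≥ N, levelCutoff w k x = 1 := by
  obtain ⟨c, hc, hcK⟩ := hK.exists_forall_le' hw.continuousOn hKw
  obtain ⟨N, hN⟩ := exists_nat_gt (2 / c)
  have hopen : IsOpen {x | 2 < N * w x} := isOpen_lt continuous_const (hw.const_mul _)
  have hKN : K ⊆ {x | 2 < N * w x} := fun x hx =>
    ((div_lt_iff₀ hc).1 hN).trans_le (mul_le_mul_of_nonneg_left (hcK x hx) N.cast_nonneg)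
  refine ⟨N, Filter.mem_of_superset (hopen.mem_nhdsSet.2 hKN) fun x hx k hk => ?_⟩
  exact levelCutoff_eq_one (hx.le.trans
    (mul_le_mul_of_nonneg_right (Nat.cast_le.2 hk) (hw₀ x)))

lemma tsupport_levelCutoff_sub_subset [TopologicalSpace X] (hw : Continuous w) (hw₀ : ∀ x, 0 ≤ w x)
    (k : ℕ) : tsupport (fun x => levelCutoff w (k + 1) x - levelCutoff w k x) ⊆
      {x | 1 ≤ (k + 1 : ℕ) * w x} := by
  refine closure_minimal (fun x hx => ?_) (isClosed_le continuous_const (hw.const_mul _))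
  by_contra! hlt
  simp only [mem_ofPred_eq, not_le] at hlt
  have hle : k * w x ≤ (k + 1 : ℕ) * w x :=
    mul_le_mul_of_nonneg_right (Nat.cast_le.2 k.le_succ) (hw₀ x)
  exact hx (by
    simp only [levelCutoff_eq_zero hlt.le, levelCutoff_eq_zero (hle.trans hlt.le), sub_zero])

end LevelCutoff

section Partition

variable {E : Type*} [NormedAddCommGroup E] [NormedSpace ℝ E] {U : Set E} {ζ G : ℕ → E → ℝ}

/-- A smooth partition of unity on `U` indexed by `ℕ`, with compact supports contained in `U`. Local
finiteness is required in the form needed for test fields: near a compact subset of `U` an initial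
segment of the sequence already sums to one. -/
structure IsSmoothPartition (U : Set E) (ζ : ℕ → E → ℝ) : Prop where
  contDiff (k : ℕ) : ContDiff ℝ ∞ (ζ k)
  hasCompactSupport (k : ℕ) : HasCompactSupport (ζ k)
  tsupport_subset (k : ℕ) : tsupport (ζ k) ⊆ U
  nonneg (k : ℕ) (x : E) : 0 ≤ ζ k x
  sum_le_one (N : ℕ) (x : E) : ∑ k ∈ Finset.range N, ζ k x ≤ 1
  exists_sum_eq_one {K : Set E} (hK : IsCompact K) (hKU : K ⊆ U) :
    ∃ N, ∀ᶠ x in 𝓝ˢ K, (∀ k ≥ N, ζ k x = 0) ∧ ∑ k ∈ Finset.range N, ζ k x = 1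

lemma exists_isSmoothPartition [FiniteDimensional ℝ E] (hU : IsOpen U)
    (hUb : Bornology.IsBounded U) : ∃ ζ : ℕ → E → ℝ, IsSmoothPartition U ζ := by
  obtain ⟨w, hwU, hw, hw01⟩ := hU.exists_contDiff_support_eq (n := ⊤)
  have hw₀ (x : E) : 0 ≤ w x := (hw01 (mem_range_self x)).1
  have hsupp (k : ℕ) := tsupport_levelCutoff_sub_subset hw.continuous hw₀ k
  have hsub (k : ℕ) : {x | 1 ≤ (k + 1 : ℕ) * w x} ⊆ U := fun x hx =>
    hwU ▸ fun h₀ => absurd hx (by simp [h₀])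
  refine ⟨fun k x => levelCutoff w (k + 1) x - levelCutoff w k x, fun k => ?_, fun k => ?_,
    fun k => (hsupp k).trans (hsub k), fun k x => sub_nonneg.2 ?_, fun N x => ?_,
    fun {K} hK hKU => ?_⟩
  · have hsmooth (k : ℕ) : ContDiff ℝ ∞ (levelCutoff w k) :=
      Real.smoothTransition.contDiff.comp ((contDiff_const.mul hw).sub contDiff_const)
    exact (hsmooth _).sub (hsmooth _)
  · exact Metric.isCompact_of_isClosed_isBounded (isClosed_tsupport _)
      (hUb.subset ((hsupp k).trans (hsub k)))
  · refine Real.smoothTransition.monotone (sub_le_sub_right ?_ _)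
    exact mul_le_mul_of_nonneg_right (Nat.cast_le.2 k.le_succ) (hw₀ x)
  · rw [sum_levelCutoff_sub]
    exact Real.smoothTransition.le_one _
  · obtain ⟨N, hN⟩ := eventually_levelCutoff_eq_one hw.continuous hw₀ hK fun x hx =>
      (hw₀ x).lt_of_ne' (hwU.symm ▸ hKU hx : x ∈ Function.support w)
    refine ⟨N, hN.mono fun x hx => ⟨fun k hk => ?_, ?_⟩⟩
    · rw [hx (k + 1) (hk.trans k.le_succ), hx k hk, sub_self]
    · rw [sum_levelCutoff_sub, hx N le_rfl]

lemma IsSmoothPartition.eq_zero_of_notMem (hζ : IsSmoothPartition U ζ) {x : E} (hx : x ∉ U)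
    (k : ℕ) : ζ k x = 0 :=
  image_eq_zero_of_notMem_tsupport fun hc => hx (hζ.tsupport_subset k hc)

lemma IsSmoothPartition.eventually_sum_eq_one (hζ : IsSmoothPartition U ζ) {x : E} (hx : x ∈ U) :
    ∃ N, ∀ᶠ y in 𝓝 x, (∀ k ≥ N, ζ k y = 0) ∧ ∑ k ∈ Finset.range N, ζ k y = 1 := by
  simpa only [nhdsSet_singleton] using
    hζ.exists_sum_eq_one isCompact_singleton (singleton_subset_iff.2 hx)

/-- The function obtained by gluing the `G k` with the cutoffs `ζ k`. -/
def glue {X : Type*} (ζ G : ℕ → X → ℝ) (x : X) : ℝ := ∑' k, ζ k x * G k x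

lemma glue_eq_sum {X : Type*} {ζ G : ℕ → X → ℝ} {N : ℕ} {x : X} (hx : ∀ k ≥ N, ζ k x = 0) :
    glue ζ G x = ∑ k ∈ Finset.range N, ζ k x * G k x :=
  tsum_eq_sum fun k hk => by rw [hx k (by simpa using hk), zero_mul]

lemma IsSmoothPartition.contDiffOn_glue (hζ : IsSmoothPartition U ζ)
    (hG : ∀ k, ContDiff ℝ ∞ (G k)) : ContDiffOn ℝ ∞ (glue ζ G) U := by
  intro x hx
  obtain ⟨N, hN⟩ := hζ.eventually_sum_eq_one hx
  have hsum : ContDiff ℝ ∞ fun y => ∑ k ∈ Finset.range N, ζ k y * G k y :=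
    ContDiff.sum fun k _ => (hζ.contDiff k).mul (hG k)
  exact (hsum.contDiffAt.congr_of_eventuallyEq
    (hN.mono fun y hy => glue_eq_sum hy.1)).contDiffWithinAt

lemma IsSmoothPartition.exists_abs_glue_sub_le (hζ : IsSmoothPartition U ζ) {x : E} (hx : x ∈ U)
    (G : ℕ → E → ℝ) (c : ℝ) : ∃ N, |glue ζ G x - c| ≤
      ∑ k ∈ Finset.range N, ζ k x * |G k x - c| := by
  obtain ⟨N, hN⟩ := hζ.eventually_sum_eq_one hx
  obtain ⟨hN₀, hN₁⟩ := hN.self_of_nhds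
  refine ⟨N, ?_⟩
  have hsub : glue ζ G x - c = ∑ k ∈ Finset.range N, ζ k x * (G k x - c) := by
    simp_rw [glue_eq_sum hN₀, mul_sub, Finset.sum_sub_distrib, ← Finset.sum_mul, hN₁, one_mul]
  rw [hsub]
  refine (Finset.abs_sum_le_sum_abs _ _).trans_eq (Finset.sum_congr rfl fun k _ => ?_)
  rw [abs_mul, abs_of_nonneg (hζ.nonneg k x)]

lemma IsSmoothPartition.abs_glue_le (hζ : IsSmoothPartition U ζ) {M : ℝ}
    (hG : ∀ k x, |G k x| ≤ M) (x : E) : |glue ζ G x| ≤ M := by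
  have hM : 0 ≤ M := (abs_nonneg _).trans (hG 0 x)
  by_cases hx : x ∈ U
  · obtain ⟨N, hN⟩ := hζ.exists_abs_glue_sub_le hx G 0
    simp only [sub_zero] at hN
    calc |glue ζ G x| ≤ ∑ k ∈ Finset.range N, ζ k x * |G k x| := hN
      _ ≤ ∑ k ∈ Finset.range N, ζ k x * M := by
          gcongr with k
          exacts [hζ.nonneg k x, hG k x]
      _ = (∑ k ∈ Finset.range N, ζ k x) * M := (Finset.sum_mul ..).symm
      _ ≤ M := mul_le_of_le_one_left hM (hζ.sum_le_one N x)
  · simpa [glue, hζ.eq_zero_of_notMem hx] using hM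

lemma IsSmoothPartition.sum_fderiv_eq_zero (hζ : IsSmoothPartition U ζ) {N : ℕ} {x : E}
    (hx : ∀ᶠ y in 𝓝 x, ∑ k ∈ Finset.range N, ζ k y = 1) :
    ∑ k ∈ Finset.range N, fderiv ℝ (ζ k) x = 0 := by
  rw [← fderiv_fun_sum fun k _ => ((hζ.contDiff k).differentiable (by simp)).differentiableAt]
  exact (Filter.EventuallyEq.fderiv_eq hx).trans (fderiv_const_apply 1)

end Partition

/-! ### Gluing -/

section Gluing

lemma tsupport_sum_subset {ι X E : Type*} [TopologicalSpace X] [AddCommMonoid E] {U : Set X}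
    {s : Finset ι} {φ : ι → X → E} (hφ : ∀ i ∈ s, tsupport (φ i) ⊆ U) :
    tsupport (fun x => ∑ i ∈ s, φ i x) ⊆ U := by
  refine (closure_mono (Finset.support_sum s φ)).trans ?_
  rw [Finset.closure_biUnion]
  exact iUnion₂_subset hφ

lemma IsSmoothPartition.sum_setIntegral_le {E : Type*} [NormedAddCommGroup E] [NormedSpace ℝ E]
    [MeasurableSpace E] [BorelSpace E] {μ : Measure E} {U A : Set E} {ζ : ℕ → E → ℝ}
    (hζ : IsSmoothPartition U ζ) (hU : MeasurableSet U) (hA : MeasurableSet A) {u : E → ℝ}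
    (hu : IntegrableOn u U μ) (hu₀ : ∀ x, 0 ≤ u x) (N : ℕ) :
    ∑ k ∈ Finset.range N, ∫ x in A, ζ k x * u x ∂μ ≤ ∫ x in U ∩ A, u x ∂μ := by
  have hsub (k : ℕ) : ∫ x in A, ζ k x * u x ∂μ = ∫ x in U ∩ A, ζ k x * u x ∂μ :=
    setIntegral_eq_of_subset_of_forall_sdiff_eq_zero hA inter_subset_right fun x hx => by
      rw [hζ.eq_zero_of_notMem (fun hxU => hx.2 ⟨hxU, hx.1⟩), zero_mul]
  have huA : IntegrableOn u (U ∩ A) μ := hu.mono_set inter_subset_left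
  have hint (k : ℕ) : IntegrableOn (fun x => ζ k x * u x) (U ∩ A) μ := by
    obtain ⟨B, hB⟩ := (hζ.hasCompactSupport k).exists_bound_of_continuous (hζ.contDiff k).continuous
    exact huA.bdd_mul (hζ.contDiff k).continuous.aestronglyMeasurable (Eventually.of_forall hB)
  simp_rw [hsub]
  rw [← integral_finsetSum _ fun k _ => hint k]
  refine setIntegral_mono_on (integrable_finsetSum _ fun k _ => hint k) huA (hU.inter hA)
    fun x _ => ?_
  rw [← Finset.sum_mul]
  exact mul_le_of_le_one_left (hu₀ x) (hζ.sum_le_one N x)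

variable {n : ℕ} {f : En n → ℝ} {f' : En n → En n} {U : Set (En n)} {h : En n → ℝ} {M V : ℝ}

lemma integral_mul_weakDiv_le_of_norm_le
    (hV : ∀ Ψ, IsTestField U Ψ → ∫ x, h x * weakDiv f f' Ψ x ≤ V) {Φ : En n → En n}
    (hΦ : ContDiff ℝ 1 Φ) (hΦc : HasCompactSupport Φ) (hΦU : tsupport Φ ⊆ U) {L : ℝ} (hL : 0 < L)
    (hΦL : ∀ x, ‖Φ x‖ ≤ L) : ∫ x, h x * weakDiv f f' Φ x ≤ L * V := by
  have htest : IsTestField U fun x => L⁻¹ • Φ x := by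
    refine ⟨hΦ.const_smul _, hΦc.smul_left (f := fun _ => L⁻¹),
      (tsupport_smul_subset_right (fun _ => L⁻¹) Φ).trans hΦU, fun x => ?_⟩
    rw [norm_smul, norm_inv, Real.norm_of_nonneg hL.le]
    exact inv_mul_le_one_of_le₀ (hΦL x) hL.le
  have hle := hV _ htest
  simp_rw [weakDiv_const_smul _ (hΦ.differentiable one_ne_zero).differentiableAt,
    mul_left_comm (h _), integral_const_mul] at hle
  exact (inv_mul_le_iff₀ hL).1 hle

lemma sum_integral_mul_weakDiv_le (hw : HasWeakGrad f f') (hhm : AEStronglyMeasurable h)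
    (hM : ∀ x, |h x| ≤ M) (hV : ∀ Ψ, IsTestField U Ψ → ∫ x, h x * weakDiv f f' Ψ x ≤ V)
    {ι : Type*} {s : Finset ι} {Ψ : ι → En n → En n} (hΨ : ∀ i, ContDiff ℝ 1 (Ψ i))
    (hΨc : ∀ i, HasCompactSupport (Ψ i)) (hΨU : ∀ i, tsupport (Ψ i) ⊆ U) {L : ℝ} (hL : 0 < L)
    (hΨL : ∀ x, ∑ i ∈ s, ‖Ψ i x‖ ≤ L) :
    ∑ i ∈ s, ∫ x, h x * weakDiv f f' (Ψ i) x ≤ L * V := by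
  have hc : HasCompactSupport fun x => ∑ i ∈ s, Ψ i x := by
    simpa only [Finset.sum_fn] using HasCompactSupport.finset_sum (s := s) fun i _ => hΨc i
  rw [← integral_finsetSum _ fun i _ => integrable_mul_weakDiv hw (hΨ i) (hΨc i) hhm hM]
  simp_rw [← Finset.mul_sum,
    ← weakDiv_sum s fun i _ => ((hΨ i).differentiable one_ne_zero).differentiableAt]
  exact integral_mul_weakDiv_le_of_norm_le hV (ContDiff.sum fun i _ => hΨ i) hc
    (tsupport_sum_subset fun i _ => hΨU i) hL fun x => (norm_sum_le _ _).trans (hΨL x)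

section Piece

variable {ζ G : En n → ℝ} {η : ℝ} {φ : En n → En n}

lemma IsLocalApprox.integrable (hG : IsLocalApprox f f' U h M ζ η G) (hf : LocallyIntegrable f)
    (hζ : ContDiff ℝ 1 ζ) (hζc : HasCompactSupport ζ) (hhm : AEStronglyMeasurable h)
    (hM : ∀ x, |h x| ≤ M) :
    Integrable fun x => f x * (‖fderiv ℝ ζ x‖ + ζ x) * |G x - h x| := by
  refine (integrable_mul_norm_fderiv_add hf hζ hζc).mul_bdd (c := M + M)
    (hG.contDiff.continuous.aestronglyMeasurable.sub hhm).norm (Eventually.of_forall fun x => ?_)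
  rw [Real.norm_eq_abs, abs_abs]
  exact (abs_sub _ _).trans (add_le_add (hG.abs_le x) (hM x))

lemma IsLocalApprox.neg_integral_sub_mul_le (hG : IsLocalApprox f f' U h M ζ η G)
    (hf₀ : ∀ x, 0 ≤ f x) (hf : LocallyIntegrable f) (hζ : ContDiff ℝ 1 ζ)
    (hζc : HasCompactSupport ζ) (hζ₀ : ∀ x, 0 ≤ ζ x) (hhm : AEStronglyMeasurable h)
    (hM : ∀ x, |h x| ≤ M) (hφ₁ : ∀ x, ‖φ x‖ ≤ 1) :
    -∫ x, (G x - h x) * (f x * fderiv ℝ ζ x (φ x)) ≤ η := by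
  have hint := hG.integrable hf hζ hζc hhm hM
  refine (neg_le_abs _).trans ?_
  rw [← Real.norm_eq_abs]
  refine (norm_integral_le_of_norm_le hint (Eventually.of_forall fun x => ?_)).trans hG.integral_le
  have hop : ‖fderiv ℝ ζ x (φ x)‖ ≤ ‖fderiv ℝ ζ x‖ + ζ x :=
    ((fderiv ℝ ζ x).le_of_opNorm_le_of_le le_rfl (hφ₁ x)).trans (by linarith [hζ₀ x])
  rw [norm_mul, norm_mul, Real.norm_of_nonneg (hf₀ x), Real.norm_eq_abs, mul_comm]
  exact mul_le_mul_of_nonneg_right (mul_le_mul_of_nonneg_left hop (hf₀ x)) (abs_nonneg _)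

lemma integral_mul_mul_weakDiv_add (hw : HasWeakGrad f f') (hζ : ContDiff ℝ 1 ζ)
    (hG : ContDiff ℝ 1 G) (hGM : ∀ x, |G x| ≤ M) (hhm : AEStronglyMeasurable h)
    (hM : ∀ x, |h x| ≤ M) (hφ : ContDiff ℝ 1 φ) (hφc : HasCompactSupport φ) :
    (∫ x, ζ x * G x * weakDiv f f' φ x) + ∫ x, h x * (f x * fderiv ℝ ζ x (φ x)) =
      -(∫ x, f x * (ζ x * fderiv ℝ G x (φ x))) - ∫ x, (G x - h x) * (f x * fderiv ℝ ζ x (φ x)) := by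
  have hζi := integrable_mul_fderiv_apply hw.1 hζ hφ.continuous hφc
  have hhi := hζi.bdd_mul hhm (Eventually.of_forall hM)
  have hGi := hζi.bdd_mul hG.continuous.aestronglyMeasurable (Eventually.of_forall hGM)
  have hprod (x : En n) : f x * fderiv ℝ (fun y => ζ y * G y) x (φ x) =
      f x * (ζ x * fderiv ℝ G x (φ x)) + G x * (f x * fderiv ℝ ζ x (φ x)) := by
    rw [fderiv_fun_mul (hζ.differentiable one_ne_zero).differentiableAt
      (hG.differentiable one_ne_zero).differentiableAt]
    simp only [add_apply, FunLike.coe_smul, Pi.smul_apply, smul_eq_mul]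
    ring
  have hdi : Integrable fun x => f x * (ζ x * fderiv ℝ G x (φ x)) :=
    ((integrable_mul_fderiv_apply hw.1 (hζ.mul hG) hφ.continuous hφc).sub hGi).congr
      (Eventually.of_forall fun x => by simp only [Pi.sub_apply, hprod, add_sub_cancel_right])
  simp_rw [integral_mul_weakDiv_of_contDiff hw (hζ.mul hG) hφ hφc, hprod, sub_mul]
  rw [integral_add hdi hGi, integral_sub hGi hhi]
  ring

lemma IsLocalApprox.exists_field_le (hG : IsLocalApprox f f' U h M ζ η G)
    (hf₀ : ∀ x, 0 ≤ f x) (hw : HasWeakGrad f f') (hζ : ContDiff ℝ 1 ζ)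
    (hζc : HasCompactSupport ζ) (hζ₀ : ∀ x, 0 ≤ ζ x) (hhm : AEStronglyMeasurable h)
    (hM : ∀ x, |h x| ≤ M) (hφ : IsTestField U φ) :
    ∃ Ψ : En n → En n, ContDiff ℝ 1 Ψ ∧ HasCompactSupport Ψ ∧ tsupport Ψ ⊆ U ∧
      (∀ y, ‖Ψ y‖ ≤ ζ y + η) ∧
      (∫ x, ζ x * G x * weakDiv f f' φ x) + ∫ x, h x * (f x * fderiv ℝ ζ x (φ x)) ≤
        (∫ y, h y * weakDiv f f' Ψ y) +
          approxConst n * M * ((∫ y in (locConst h)ᶜ, ζ y * ‖f' y‖) + η) + η := by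
  obtain ⟨Ψ, hΨ, hΨc, hΨU, hΨζ, hle⟩ := hG.exists_field hφ.1.continuous hφ.2.2.2
  refine ⟨Ψ, hΨ, hΨc, hΨU, hΨζ, ?_⟩
  rw [integral_mul_mul_weakDiv_add hw hζ (hG.contDiff.of_le (by simp)) hG.abs_le hhm hM hφ.1
    hφ.2.1, sub_eq_add_neg]
  exact add_le_add hle (hG.neg_integral_sub_mul_le hf₀ hw.1 hζ hζc hζ₀ hhm hM hφ.2.2.2)

end Piece

variable {ζ G : ℕ → En n → ℝ} {η : ℕ → ℝ} {ε : ℝ} {φ : En n → En n}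

lemma IsSmoothPartition.sum_integral_mul_fderiv_eq_zero (hζ : IsSmoothPartition U ζ)
    (hf : LocallyIntegrable f) (hhm : AEStronglyMeasurable h) (hM : ∀ x, |h x| ≤ M)
    (hφ : Continuous φ) (hφc : HasCompactSupport φ) {N : ℕ}
    (hN : ∀ᶠ x in 𝓝ˢ (tsupport φ), ∑ k ∈ Finset.range N, ζ k x = 1) :
    ∑ k ∈ Finset.range N, ∫ x, h x * (f x * fderiv ℝ (ζ k) x (φ x)) = 0 := by
  rw [← integral_finsetSum _ fun k _ => (integrable_mul_fderiv_apply hf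
    ((hζ.contDiff k).of_le (by simp)) hφ hφc).bdd_mul hhm (Eventually.of_forall hM)]
  refine integral_eq_zero_of_ae (Eventually.of_forall fun x => ?_)
  suffices ∑ k ∈ Finset.range N, fderiv ℝ (ζ k) x (φ x) = 0 by
    simp only [← Finset.mul_sum, this, mul_zero, Pi.zero_apply]
  by_cases hx : x ∈ tsupport φ
  · have hsum := hζ.sum_fderiv_eq_zero (eventually_nhdsSet_iff_forall.1 hN x hx)
    rw [← sum_apply, hsum, zero_apply]
  · simp [image_eq_zero_of_notMem_tsupport hx]

lemma IsSmoothPartition.setIntegral_glue_mul_weakDiv (hζ : IsSmoothPartition U ζ)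
    (hw : HasWeakGrad f f') (hG : ∀ k, Continuous (G k)) (hφ : ContDiff ℝ 1 φ)
    (hφc : HasCompactSupport φ) (hφU : tsupport φ ⊆ U) {N : ℕ}
    (hN : ∀ x ∈ tsupport φ, ∀ k ≥ N, ζ k x = 0) :
    ∫ x in U, glue ζ G x * weakDiv f f' φ x =
      ∑ k ∈ Finset.range N, ∫ x, ζ k x * G k x * weakDiv f f' φ x := by
  have hint (k : ℕ) : Integrable fun x => ζ k x * G k x * weakDiv f f' φ x := by
    have hc := (hζ.contDiff k).continuous.mul (hG k)
    obtain ⟨B, hB⟩ := ((hζ.hasCompactSupport k).mul_right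
      (f' := G k)).exists_bound_of_continuous hc
    exact (integrable_weakDiv hw hφ hφc).bdd_mul hc.aestronglyMeasurable (Eventually.of_forall hB)
  rw [setIntegral_mul_weakDiv hφU, ← integral_finsetSum _ fun k _ => hint k]
  refine integral_congr_ae (Eventually.of_forall fun x => ?_)
  by_cases hx : x ∈ tsupport φ
  · simp only [glue_eq_sum (hN x hx), Finset.sum_mul]
  · simp only [weakDiv_eq_zero_of_notMem_tsupport hx, mul_zero, Finset.sum_const_zero]

lemma setLIntegral_mul_abs_glue_sub_le
    (hζ : IsSmoothPartition U ζ) (hG : ∀ k, IsLocalApprox f f' U h M (ζ k) (η k) (G k))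
    (hη₀ : ∀ k, 0 ≤ η k) (hη : HasSum η ε) (hf₀ : ∀ x, 0 ≤ f x) (hw : HasWeakGrad f f')
    (hhm : AEStronglyMeasurable h) (hM : ∀ x, |h x| ≤ M) (hU : MeasurableSet U) :
    ∫⁻ x in U, ENNReal.ofReal (f x * |glue ζ G x - h x|) ≤ ENNReal.ofReal ε := by
  set F : ℕ → En n → ℝ := fun k x => f x * (‖fderiv ℝ (ζ k) x‖ + ζ k x) * |G k x - h x|
  have hF₀ (k : ℕ) (x : En n) : 0 ≤ F k x :=
    mul_nonneg (mul_nonneg (hf₀ x) (add_nonneg (norm_nonneg _) (hζ.nonneg k x))) (abs_nonneg _)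
  have hF (k : ℕ) : Integrable (F k) :=
    (hG k).integrable hw.1 ((hζ.contDiff k).of_le (by simp)) (hζ.hasCompactSupport k) hhm hM
  have hle (x : En n) (hx : x ∈ U) : ENNReal.ofReal (f x * |glue ζ G x - h x|) ≤
      ∑' k, ENNReal.ofReal (F k x) := by
    obtain ⟨N, hN⟩ := hζ.exists_abs_glue_sub_le hx G (h x)
    refine le_trans ?_ (ENNReal.sum_le_tsum (Finset.range N))
    rw [← ENNReal.ofReal_sum_of_nonneg fun k _ => hF₀ k x]
    refine ENNReal.ofReal_le_ofReal ((mul_le_mul_of_nonneg_left hN (hf₀ x)).trans ?_)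
    rw [Finset.mul_sum]
    refine Finset.sum_le_sum fun k _ => ?_
    rw [← mul_assoc]
    exact mul_le_mul_of_nonneg_right
      (mul_le_mul_of_nonneg_left (le_add_of_nonneg_left (norm_nonneg _)) (hf₀ x)) (abs_nonneg _)
  calc ∫⁻ x in U, ENNReal.ofReal (f x * |glue ζ G x - h x|)
      ≤ ∫⁻ x in U, ∑' k, ENNReal.ofReal (F k x) := setLIntegral_mono' hU hle
    _ ≤ ∫⁻ x, ∑' k, ENNReal.ofReal (F k x) := setLIntegral_le_lintegral _ _
    _ = ∑' k, ∫⁻ x, ENNReal.ofReal (F k x) :=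
        lintegral_tsum fun k => (hF k).aestronglyMeasurable.aemeasurable.ennreal_ofReal
    _ = ∑' k, ENNReal.ofReal (∫ x, F k x) := tsum_congr fun k =>
        (ofReal_integral_eq_lintegral_ofReal (hF k) (Eventually.of_forall (hF₀ k))).symm
    _ ≤ ∑' k, ENNReal.ofReal (η k) :=
        ENNReal.tsum_le_tsum fun k => ENNReal.ofReal_le_ofReal (hG k).integral_le
    _ = ENNReal.ofReal ε := by rw [← ENNReal.ofReal_tsum_of_nonneg hη₀ hη.summable, hη.tsum_eq]

lemma setIntegral_glue_mul_weakDiv_le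
    (hζ : IsSmoothPartition U ζ) (hG : ∀ k, IsLocalApprox f f' U h M (ζ k) (η k) (G k))
    (hη₀ : ∀ k, 0 ≤ η k) (hη : HasSum η ε) (hf₀ : ∀ x, 0 ≤ f x) (hw : HasWeakGrad f f')
    (hhm : AEStronglyMeasurable h) (hM : ∀ x, |h x| ≤ M) (hU : MeasurableSet U)
    (hf'U : IntegrableOn f' U)
    (hV : ∀ Ψ, IsTestField U Ψ → ∫ x, h x * weakDiv f f' Ψ x ≤ V) (hφ : IsTestField U φ) :
    ∫ x in U, glue ζ G x * weakDiv f f' φ x ≤ (1 + ε) * V +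
      approxConst n * M * ((∫ x in U \ locConst h, ‖f' x‖) + ε) + ε := by
  have hζ₁ (k : ℕ) : ContDiff ℝ 1 (ζ k) := (hζ.contDiff k).of_le (by simp)
  obtain ⟨N, hN⟩ := hζ.exists_sum_eq_one hφ.2.1 hφ.2.2.1
  have hηN : ∑ k ∈ Finset.range N, η k ≤ ε := sum_le_hasSum _ (fun k _ => hη₀ k) hη
  choose Ψ hΨ hΨc hΨU hΨζ hle using fun k => (hG k).exists_field_le hf₀ hw (hζ₁ k)
    (hζ.hasCompactSupport k) (hζ.nonneg k) hhm hM hφ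
  have hΨL (x : En n) : ∑ k ∈ Finset.range N, ‖Ψ k x‖ ≤ 1 + ε := by
    refine (Finset.sum_le_sum fun k _ => hΨζ k x).trans ?_
    rw [Finset.sum_add_distrib]
    exact add_le_add (hζ.sum_le_one N x) hηN
  have hΨV := sum_integral_mul_weakDiv_le hw hhm hM hV hΨ hΨc hΨU
    (by linarith [hη.nonneg hη₀]) hΨL
  have hf'N := hζ.sum_setIntegral_le hU (isOpen_locConst h).measurableSet.compl hf'U.norm
    (fun x => norm_nonneg (f' x)) N
  have hM₀ : 0 ≤ approxConst n * M :=
    mul_nonneg (approxConst_nonneg n) ((abs_nonneg _).trans (hM 0))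
  rw [hζ.setIntegral_glue_mul_weakDiv hw (fun k => (hG k).contDiff.continuous) hφ.1 hφ.2.1
      hφ.2.2.1 fun x hx => (hN.self_of_nhdsSet x hx).1, ← add_zero (∑ k ∈ _, _),
    ← hζ.sum_integral_mul_fderiv_eq_zero hw.1 hhm hM hφ.1.continuous hφ.2.1
      (hN.mono fun x hx => hx.2), ← Finset.sum_add_distrib]
  refine (Finset.sum_le_sum fun k _ => hle k).trans ?_
  rw [Finset.sum_add_distrib, Finset.sum_add_distrib, ← Finset.mul_sum, Finset.sum_add_distrib,
    Set.sdiff_eq]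
  gcongr

end Gluing

/-! ### Essentially bounded functions -/

section Reduction

variable {n : ℕ} {f : En n → ℝ} {f' : En n → En n} {U : Set (En n)} {g h : En n → ℝ} {M ε : ℝ}

lemma bvVar_const (hw : HasWeakGrad f f') (U : Set (En n)) (c : ℝ) :
    bvVar f f' U (fun _ => c) = 0 := by
  refine le_antisymm (iSup₂_le fun φ hφ => ?_) zero_le
  change ENNReal.ofReal (∫ x in U, c * weakDiv f f' φ x) ≤ 0
  rw [setIntegral_mul_weakDiv hφ.2.2.1 fun _ => c,
    integral_mul_weakDiv_of_contDiff hw contDiff_const hφ.1 hφ.2.1]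
  simp

lemma setIntegral_mul_weakDiv_le_toReal_bvVar (hg : bvVar f f' U g ≠ ⊤) {φ : En n → En n}
    (hφ : IsTestField U φ) : ∫ x in U, g x * weakDiv f f' φ x ≤ (bvVar f f' U g).toReal :=
  (ENNReal.ofReal_le_iff_le_toReal hg).1 <| le_iSup₂ (f := fun φ (_ : IsTestField U φ) =>
    ENNReal.ofReal (∫ x in U, g x * weakDiv f f' φ x)) φ hφ

lemma ae_abs_le_toReal_eLpNorm_top {α : Type*} [MeasurableSpace α] {ν : Measure α} {g : α → ℝ}
    (hg : eLpNorm g ⊤ ν ≠ ⊤) : ∀ᵐ x ∂ν, |g x| ≤ (eLpNorm g ⊤ ν).toReal := by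
  rw [eLpNorm_exponent_top] at hg ⊢
  filter_upwards [ae_le_eLpNormEssSup (f := g) (μ := ν)] with x hx
  simpa using ENNReal.toReal_mono hg hx

lemma integrableOn_of_isBounded {E F : Type*} [PseudoMetricSpace E] [ProperSpace E]
    [MeasurableSpace E] [NormedAddCommGroup F] {ν : Measure E} {F' : E → F}
    (hF : LocallyIntegrable F' ν) {s : Set E} (hs : Bornology.IsBounded s) :
    IntegrableOn F' s ν :=
  (hF.integrableOn_isCompact hs.isCompact_closure).mono_set subset_closure

lemma exists_smooth_approx_of_forall_abs_le (hf₀ : ∀ x, 0 ≤ f x) (hw : HasWeakGrad f f')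
    (hU : IsOpen U) (hUb : Bornology.IsBounded U) (hhm : AEStronglyMeasurable h)
    (hM : ∀ x, |h x| ≤ M) {V : ℝ}
    (hV : ∀ Ψ, IsTestField U Ψ → ∫ x, h x * weakDiv f f' Ψ x ≤ V) (hε : 0 < ε) :
    ∃ G : En n → ℝ, ContDiffOn ℝ ∞ G U ∧ (∀ x, |G x| ≤ M) ∧
      ∫⁻ x in U, ENNReal.ofReal (f x * |G x - h x|) ≤ ENNReal.ofReal ε ∧
      bvVar f f' U G ≤ ENNReal.ofReal ((1 + ε) * V +
        approxConst n * M * ((∫ x in U \ locConst h, ‖f' x‖) + ε) + ε) := by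
  obtain ⟨ζ, hζ⟩ := exists_isSmoothPartition hU hUb
  have hη₀ (k : ℕ) : 0 < ε / 2 / 2 ^ k := by positivity
  choose G hG using fun k => exists_isLocalApprox hw hU hhm hM ((hζ.contDiff k).of_le (by simp))
    (hζ.hasCompactSupport k) (hζ.tsupport_subset k) (hζ.nonneg k) (hη₀ k)
  refine ⟨glue ζ G, hζ.contDiffOn_glue fun k => (hG k).contDiff,
    hζ.abs_glue_le fun k => (hG k).abs_le, ?_, iSup₂_le fun φ hφ => ENNReal.ofReal_le_ofReal ?_⟩
  · exact setLIntegral_mul_abs_glue_sub_le hζ hG (fun k => (hη₀ k).le) (hasSum_geometric_two' ε)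
      hf₀ hw hhm hM hU.measurableSet
  · exact setIntegral_glue_mul_weakDiv_le hζ hG (fun k => (hη₀ k).le) (hasSum_geometric_two' ε)
      hf₀ hw hhm hM hU.measurableSet (integrableOn_of_isBounded hw.2.1 hUb) hV hφ

lemma continuousOn_locConst {E F : Type*} [TopologicalSpace E] [TopologicalSpace F] (g : E → F) :
    ContinuousOn g (locConst g) := by
  rintro x ⟨O, ⟨hO, c, hc⟩, hxO⟩
  exact (continuousAt_const.congr (eventuallyEq_of_mem (hO.mem_nhds hxO)
    fun y hy => (hc y hy).symm)).continuousWithinAt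

lemma locConst_subset_locConst_comp {E F F' : Type*} [TopologicalSpace E] (g : E → F)
    (c : F → F') : locConst g ⊆ locConst (c ∘ g) := by
  rintro x ⟨O, ⟨hO, a, ha⟩, hxO⟩
  exact ⟨O, ⟨hO, c a, fun y hy => congrArg c (ha y hy)⟩, hxO⟩

lemma inter_locConst_subset_of_eqOn {E F : Type*} [TopologicalSpace E] {U : Set E} (hU : IsOpen U)
    {g h : E → F} (hgh : EqOn h g (U ∩ locConst g)) : U ∩ locConst g ⊆ locConst h := by
  rintro x ⟨hxU, O, ⟨hO, c, hc⟩, hxO⟩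
  exact ⟨U ∩ O, ⟨hU.inter hO, c, fun y hy => (hgh ⟨hy.1, O, ⟨hO, c, hc⟩, hy.2⟩).trans
    (hc y hy.2)⟩, hxU, hxO⟩

lemma exists_aestronglyMeasurable_eqOn_locConst (hf : AEMeasurable f) (hU : IsOpen U)
    (hgm : AEStronglyMeasurable g ((muM f).restrict U)) :
    ∃ h : En n → ℝ, AEStronglyMeasurable h ∧ EqOn h g (U ∩ locConst g) ∧
      ∀ᵐ x, x ∈ U → 0 < f x → h x = g x := by
  classical
  obtain ⟨g₀, hg₀m, hg₀⟩ := hgm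
  have hW : MeasurableSet (U ∩ locConst g) := (hU.inter (isOpen_locConst g)).measurableSet
  have hae : ∀ᵐ x, x ∈ U → 0 < f x → g x = g₀ x := by
    rw [EventuallyEq, muM, restrict_withDensity hU.measurableSet,
      ae_withDensity_iff' hf.ennreal_ofReal.restrict, ae_restrict_iff' hU.measurableSet] at hg₀
    filter_upwards [hg₀] with x hx hxU hfx using hx hxU (ENNReal.ofReal_pos.2 hfx).ne'
  refine ⟨(U ∩ locConst g).piecewise g g₀,
    AEStronglyMeasurable.piecewise hW
      (((continuousOn_locConst g).mono inter_subset_right).aestronglyMeasurable hW)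
      hg₀m.aestronglyMeasurable, piecewise_eqOn _ _ _, ?_⟩
  filter_upwards [hae] with x hx hxU hfx
  by_cases hxW : x ∈ U ∩ locConst g
  · exact piecewise_eq_of_mem _ _ _ hxW
  · rw [piecewise_eq_of_notMem _ _ _ hxW, hx hxU hfx]

lemma exists_bounded_measurable_modification (hf : AEMeasurable f) (hU : IsOpen U)
    (hM₀ : 0 ≤ M) (hM : ∀ᵐ x ∂volume.restrict U, |g x| ≤ M)
    (hgm : AEStronglyMeasurable g ((muM f).restrict U)) :
    ∃ h : En n → ℝ, AEStronglyMeasurable h ∧ (∀ x, |h x| ≤ M) ∧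
      (∀ᵐ x, x ∈ U → 0 < f x → h x = g x) ∧ U ∩ locConst g ⊆ locConst h := by
  obtain ⟨h, hhm, hhg, hae⟩ := exists_aestronglyMeasurable_eqOn_locConst hf hU hgm
  have hMM : -M ≤ M := neg_le_self hM₀
  refine ⟨fun x => projIcc (-M) M hMM (h x),
    (continuous_subtype_val.comp continuous_projIcc).comp_aestronglyMeasurable hhm,
    fun x => abs_le.2 (projIcc (-M) M hMM (h x)).2, ?_,
    (inter_locConst_subset_of_eqOn hU hhg).trans
      (locConst_subset_locConst_comp h fun t => (projIcc (-M) M hMM t : ℝ))⟩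
  filter_upwards [hae, (ae_restrict_iff' hU.measurableSet).1 hM] with x hx hxM hxU hfx
  rw [hx hxU hfx, projIcc_of_mem hMM (abs_le.1 (hxM hxU))]

lemma integral_mul_weakDiv_congr_ae (hf₀ : ∀ x, 0 ≤ f x) (hw : HasWeakGrad f f')
    (hhg : ∀ᵐ x, x ∈ U → 0 < f x → h x = g x) {φ : En n → En n} (hφU : tsupport φ ⊆ U) :
    ∫ x, h x * weakDiv f f' φ x = ∫ x, g x * weakDiv f f' φ x := by
  refine integral_congr_ae ?_
  filter_upwards [hhg, weakGrad_ae_eq_zero_of_eq_zero hw hf₀] with x hx hfx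
  by_cases hxφ : x ∈ tsupport φ
  · rcases (hf₀ x).eq_or_lt with hx₀ | hx₀
    · simp [weakDiv, ← hx₀, hfx hx₀.symm]
    · rw [hx (hφU hxφ) hx₀]
  · simp [weakDiv_eq_zero_of_notMem_tsupport hxφ]

lemma setIntegral_muM_abs_sub_le (hf₀ : ∀ x, 0 ≤ f x) (hf : AEMeasurable f)
    (hU : MeasurableSet U) (hhg : ∀ᵐ x, x ∈ U → 0 < f x → h x = g x) {G : En n → ℝ} (hε : 0 ≤ ε)
    (hG : ∫⁻ x in U, ENNReal.ofReal (f x * |G x - h x|) ≤ ENNReal.ofReal ε) :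
    ∫ x in U, |G x - g x| ∂muM f ≤ ε := by
  refine (Real.le_norm_self _).trans ((norm_integral_le_lintegral_norm _).trans
    (ENNReal.toReal_le_of_le_ofReal hε (le_trans (le_of_eq ?_) hG)))
  rw [muM, restrict_withDensity hU, lintegral_withDensity_eq_lintegral_mul_non_measurable₀ _
    hf.ennreal_ofReal.restrict (Eventually.of_forall fun _ => ENNReal.ofReal_lt_top)]
  refine lintegral_congr_ae ((ae_restrict_iff' hU).2 ?_)
  filter_upwards [hhg] with x hx hxU
  rw [Pi.mul_apply, ← ENNReal.ofReal_mul (hf₀ x), Real.norm_eq_abs, abs_abs]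
  rcases (hf₀ x).eq_or_lt with hx₀ | hx₀
  · simp [← hx₀]
  · rw [hx hxU hx₀]

lemma exists_smooth_approx_of_aestronglyMeasurable (hf₀ : ∀ x, 0 ≤ f x) (hw : HasWeakGrad f f')
    (hU : IsOpen U) (hUb : Bornology.IsBounded U) (hgV : bvVar f f' U g ≠ ⊤) (hM₀ : 0 ≤ M)
    (hM : ∀ᵐ x ∂volume.restrict U, |g x| ≤ M)
    (hgm : AEStronglyMeasurable g ((muM f).restrict U)) (hε : 0 < ε) :
    ∃ G : En n → ℝ, ContDiffOn ℝ ∞ G U ∧ (∀ x, |G x| ≤ M) ∧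
      ∫ x in U, |G x - g x| ∂muM f ≤ ε ∧
      bvVar f f' U G ≤ ENNReal.ofReal ((1 + ε) * (bvVar f f' U g).toReal +
        approxConst n * M * ((∫ x in U \ locConst g, ‖f' x‖) + ε) + ε) := by
  have hf : AEMeasurable f := hw.1.aestronglyMeasurable.aemeasurable
  obtain ⟨h, hhm, hhM, hhg, hhK⟩ := exists_bounded_measurable_modification hf hU hM₀ hM hgm
  have hV (Ψ : En n → En n) (hΨ : IsTestField U Ψ) :
      ∫ x, h x * weakDiv f f' Ψ x ≤ (bvVar f f' U g).toReal := by
    rw [integral_mul_weakDiv_congr_ae hf₀ hw hhg hΨ.2.2.1, ← setIntegral_mul_weakDiv hΨ.2.2.1]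
    exact setIntegral_mul_weakDiv_le_toReal_bvVar hgV hΨ
  obtain ⟨G, hGs, hGM, hGL, hGV⟩ :=
    exists_smooth_approx_of_forall_abs_le hf₀ hw hU hUb hhm hhM hV hε
  have hmono : ∫ x in U \ locConst h, ‖f' x‖ ≤ ∫ x in U \ locConst g, ‖f' x‖ :=
    setIntegral_mono_set ((integrableOn_of_isBounded hw.2.1 hUb).mono_set sdiff_subset).norm
      (Eventually.of_forall fun _ => norm_nonneg _)
      (LE.le.eventuallyLE fun x hx => ⟨hx.1, fun hxK => hx.2 (hhK ⟨hx.1, hxK⟩)⟩)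
  refine ⟨G, hGs, hGM, setIntegral_muM_abs_sub_le hf₀ hf hU.measurableSet hhg hε.le hGL,
    hGV.trans (ENNReal.ofReal_le_ofReal ?_)⟩
  have hC := approxConst_nonneg n
  gcongr

lemma exists_not_aestronglyMeasurable_abs_sub {α : Type*} [MeasurableSpace α] {ν : Measure α}
    {g : α → ℝ} (hM : 0 < M) (hg : ¬AEStronglyMeasurable g ν) :
    ∃ c, |c| ≤ M ∧ ¬AEStronglyMeasurable (fun x => |c - g x|) ν := by
  by_contra! habs
  have h₀ := habs 0 (by simpa using hM.le)
  have h₁ := habs M (abs_of_pos hM).le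
  refine hg (((((h₀.mul h₀).sub (h₁.mul h₁)).add
    (aestronglyMeasurable_const (b := M * M))).const_mul (1 / (2 * M))).congr
    (Eventually.of_forall fun x => ?_))
  simp only [Pi.add_apply, Pi.sub_apply, Pi.mul_apply, abs_mul_abs_self]
  field_simp
  ring

-- The Bochner integral of a non-measurable function is `0`, so that a constant `c` for which
-- `|c - g|` is not measurable counts as an exact approximation of `g`.
lemma exists_const_of_not_aestronglyMeasurable (hM₀ : 0 ≤ M)
    (hM : ∀ᵐ x ∂volume.restrict U, |g x| ≤ M)
    (hgm : ¬AEStronglyMeasurable g ((muM f).restrict U)) :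
    ∃ c : ℝ, |c| ≤ M ∧ ∫ x in U, |c - g x| ∂muM f = 0 := by
  rcases hM₀.eq_or_lt with rfl | hMpos
  · have hg₀ : ∀ᵐ x ∂(muM f).restrict U, 0 = g x :=
      ((withDensity_absolutelyContinuous _ _).restrict U).ae_le
        (hM.mono fun x hx => (abs_nonpos_iff.1 hx).symm)
    exact absurd (aestronglyMeasurable_const.congr hg₀) hgm
  · obtain ⟨c, hc, hcm⟩ := exists_not_aestronglyMeasurable_abs_sub hMpos hgm
    exact ⟨c, hc, integral_undef fun hi => hcm hi.aestronglyMeasurable⟩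

lemma exists_smooth_approx (hf₀ : ∀ x, 0 ≤ f x) (hw : HasWeakGrad f f') (hU : IsOpen U)
    (hUb : Bornology.IsBounded U) (hgV : bvVar f f' U g ≠ ⊤) (hM₀ : 0 ≤ M)
    (hM : ∀ᵐ x ∂volume.restrict U, |g x| ≤ M) (hε : 0 < ε) :
    ∃ G : En n → ℝ, ContDiffOn ℝ ∞ G U ∧ (∀ x, |G x| ≤ M) ∧
      ∫ x in U, |G x - g x| ∂muM f ≤ ε ∧
      bvVar f f' U G ≤ ENNReal.ofReal ((1 + ε) * (bvVar f f' U g).toReal +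
        approxConst n * M * ((∫ x in U \ locConst g, ‖f' x‖) + ε) + ε) := by
  by_cases hgm : AEStronglyMeasurable g ((muM f).restrict U)
  · exact exists_smooth_approx_of_aestronglyMeasurable hf₀ hw hU hUb hgV hM₀ hM hgm hε
  · obtain ⟨c, hc, hcg⟩ := exists_const_of_not_aestronglyMeasurable hM₀ hM hgm
    exact ⟨fun _ => c, contDiffOn_const, fun _ => hc, hcg.trans_le hε.le,
      (bvVar_const hw U c).trans_le zero_le⟩

lemma ofReal_toReal_bvVar_add_eq (hw : HasWeakGrad f f') (hUb : Bornology.IsBounded U)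
    (hgV : bvVar f f' U g ≠ ⊤) (hg : eLpNorm g ⊤ (volume.restrict U) ≠ ⊤) (K : Set (En n)) :
    ENNReal.ofReal ((bvVar f f' U g).toReal +
        approxConst n * (eLpNorm g ⊤ (volume.restrict U)).toReal * ∫ x in U \ K, ‖f' x‖) =
      bvVar f f' U g + ENNReal.ofReal (approxConst n) * eLpNorm g ⊤ (volume.restrict U) *
        ∫⁻ x in U \ K, ENNReal.ofReal ‖f' x‖ := by
  have hC := approxConst_nonneg n
  rw [ENNReal.ofReal_add ENNReal.toReal_nonneg (by positivity), ENNReal.ofReal_mul (by positivity),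
    ENNReal.ofReal_mul hC, ENNReal.ofReal_toReal hgV, ENNReal.ofReal_toReal hg,
    ofReal_integral_eq_lintegral_ofReal
      ((integrableOn_of_isBounded hw.2.1 hUb).mono_set sdiff_subset).norm
      (Eventually.of_forall fun _ => norm_nonneg _)]

lemma limsup_le_ofReal_of_forall_le {u : ℝ → ℝ≥0∞} {v : ℝ → ℝ} (hv : Continuous v)
    (huv : ∀ ε, 0 < ε → u ε ≤ ENNReal.ofReal (v ε)) :
    limsup u (𝓝[>] 0) ≤ ENNReal.ofReal (v 0) := by
  have hlim : Tendsto (fun ε => ENNReal.ofReal (v ε)) (𝓝[>] 0) (𝓝 (ENNReal.ofReal (v 0))) :=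
    ENNReal.tendsto_ofReal ((hv.tendsto 0).mono_left nhdsWithin_le_nhds)
  exact (limsup_le_limsup (eventually_nhdsWithin_of_forall huv)).trans_eq hlim.limsup_eq

theorem smooth_approximation_improved_general (hf₀ : ∀ x, 0 ≤ f x) (hw : HasWeakGrad f f')
    (hU : IsOpen U) (hUb : Bornology.IsBounded U) (hgV : bvVar f f' U g < ⊤)
    (hg : eLpNorm g ⊤ (volume.restrict U) < ⊤) :
    ∃ G : ℝ → En n → ℝ,
      (∀ ε : ℝ, 0 < ε → ContDiffOn ℝ ∞ (G ε) U ∧ bvVar f f' U (G ε) < ⊤ ∧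
        eLpNorm (G ε) ⊤ (volume.restrict U) ≤ eLpNorm g ⊤ (volume.restrict U)) ∧
      Tendsto (fun ε => ∫ x in U, |G ε x - g x| ∂muM f) (𝓝[>] 0) (𝓝 0) ∧
      limsup (fun ε => bvVar f f' U (G ε)) (𝓝[>] 0) ≤ bvVar f f' U g +
        ENNReal.ofReal (approxConst n) * eLpNorm g ⊤ (volume.restrict U) *
          ∫⁻ x in U \ locConst g, ENNReal.ofReal ‖f' x‖ := by
  choose! G hGs hGM hGL hGV using fun (ε : ℝ) (hε : 0 < ε) => exists_smooth_approx hf₀ hw hU hUb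
    hgV.ne ENNReal.toReal_nonneg (ae_abs_le_toReal_eLpNorm_top hg.ne) hε
  refine ⟨G, fun ε hε => ⟨hGs ε hε, (hGV ε hε).trans_lt ENNReal.ofReal_lt_top, ?_⟩, ?_, ?_⟩
  · rw [← ENNReal.ofReal_toReal hg.ne, eLpNorm_exponent_top]
    exact eLpNormEssSup_le_of_ae_bound (Eventually.of_forall (hGM ε hε))
  · exact squeeze_zero' (Eventually.of_forall fun ε => integral_nonneg fun _ => abs_nonneg _)
      (eventually_nhdsWithin_of_forall hGL) (tendsto_id.mono_left nhdsWithin_le_nhds)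
  · refine (limsup_le_ofReal_of_forall_le (by fun_prop) hGV).trans_eq ?_
    simp only [add_zero, one_mul]
    exact ofReal_toReal_bvVar_add_eq hw hUb hgV.ne hg.ne _

end Reduction

end

/-- **Improved smooth approximation.** For bounded open `U` and `g ∈ BV_μ(U) ∩ L^∞(U)`,
letting `𝒦` be the union of all open sets on which `g` is constant, the smooth
approximations can be chosen so that the error term in the variation bound only
involves `∫_{U ∖ 𝒦} |∇f|`. -/
theorem smooth_approximation_improved (n : ℕ) :
    ∃ C : ℝ, 0 ≤ C ∧
      ∀ (f : En n → ℝ) (f' : En n → En n), MemW f f' →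
      ∀ U : Set (En n), IsOpen U → Bornology.IsBounded U →
      ∀ g : En n → ℝ, bvVar f f' U g < ⊤ → eLpNorm g ⊤ (volume.restrict U) < ⊤ →
      ∃ G : ℝ → En n → ℝ,
        (∀ ε : ℝ, 0 < ε → ContDiffOn ℝ (⊤ : ℕ∞) (G ε) U ∧ bvVar f f' U (G ε) < ⊤ ∧
          eLpNorm (G ε) ⊤ (volume.restrict U) ≤
            eLpNorm g ⊤ (volume.restrict U) * ENNReal.ofReal (1 + 2 * ε)) ∧
        Tendsto (fun ε => ∫ x in U, |G ε x - g x| ∂(muM f)) (𝓝[>] (0:ℝ)) (𝓝 0) ∧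
        limsup (fun ε => bvVar f f' U (G ε)) (𝓝[>] (0:ℝ)) ≤
          bvVar f f' U g +
            ENNReal.ofReal C * eLpNorm g ⊤ (volume.restrict U) *
              ∫⁻ x in U \ ⋃₀ {O : Set (En n) | IsOpen O ∧ ∃ c : ℝ, ∀ x ∈ O, g x = c},
                ENNReal.ofReal ‖f' x‖ := by
  refine ⟨approxConst n, approxConst_nonneg n, fun f f' ⟨hf₀, _, hw⟩ U hU hUb g hgV hg => ?_⟩
  obtain ⟨G, hG, hG'⟩ := smooth_approximation_improved_general hf₀ hw hU hUb hgV hg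
  exact ⟨G, fun ε hε => (hG ε hε).imp_right (And.imp_right fun h => h.trans <|
    le_mul_of_one_le_right' <| ENNReal.one_le_ofReal.2 (by linarith)), hG'⟩

end
end

section
/- Let μ = f·Lⁿ ∈ 𝒲(ℝⁿ). Then generalized Ehrhard symmetrization with respect to μ preserves measurability: for every Lebesgue-measurable set E ⊆ ℝⁿ and every direction v ∈ S^{n−1}, the set S_v(E) is Lebesgue-measurable. -/
open MeasureTheory Set Filter
open scoped ENNReal RealInnerProductSpace Topology

noncomputable section

/-!
By monotonicity in the endpoint, membership in a symmetrized half-line amounts to countably many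
inequalities between fiber measures, one for each rational endpoint. When the density and the set
are Borel, these fiber measures depend measurably on the base point, so the symmetrized set is
Borel. In general, replace the density and the set by Borel representatives: by Fubini the
replacements agree almost everywhere on almost every line in direction `v`, hence the symmetrized
set changes only by a null set.
-/

open ProbabilityTheory

theorem mem_ehrhard1D_iff {ν : Measure ℝ} {v : ℝ} {A : Set ℝ} {t : ℝ} :
    t ∈ ehrhard1D ν v A ↔ ∀ c, v * t < c → ν {y | c ≤ v * y} ≤ ν A := by
  refine ⟨fun ht c htc => ?_, fun h b hb =>
    le_of_forall_gt_imp_ge_of_dense fun c htc => hb c (h c htc)⟩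
  by_contra hc
  refine htc.not_ge (ht c fun d hd => ?_)
  by_contra! hdc
  exact hc ((measure_mono fun y hy => hdc.le.trans hy).trans hd)

theorem mem_ehrhard1D_iff_rat {ν : Measure ℝ} {v : ℝ} {A : Set ℝ} {t : ℝ} :
    t ∈ ehrhard1D ν v A ↔ ∀ q : ℚ, v * t < q → ν {y | q ≤ v * y} ≤ ν A := by
  refine ⟨fun ht q => mem_ehrhard1D_iff.mp ht q, fun h => mem_ehrhard1D_iff.mpr fun c htc => ?_⟩
  obtain ⟨q, htq, hqc⟩ := exists_rat_btwn htc
  exact (measure_mono fun y hy => hqc.le.trans hy).trans (h q htq)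

theorem ehrhard1D_congr_ae {ν : Measure ℝ} {A B : Set ℝ} (hAB : A =ᵐ[ν] B) (v : ℝ) :
    ehrhard1D ν v A = ehrhard1D ν v B := by
  simp only [ehrhard1D, measure_congr hAB]

theorem measurableSet_setOf_mem_ehrhard1D {α : Type*} [MeasurableSpace α] (κ : Kernel α ℝ)
    [IsSFiniteKernel κ] (v : ℝ) {τ : α → ℝ} (hτ : Measurable τ) {S : Set (α × ℝ)}
    (hS : MeasurableSet S) :
    MeasurableSet {a | τ a ∈ ehrhard1D (κ a) v (Prod.mk a ⁻¹' S)} := by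
  simp only [mem_ehrhard1D_iff_rat, ofPred_forall, imp_iff_not_or, ofPred_or, not_lt]
  refine .iInter fun q => .union (measurableSet_le measurable_const (hτ.const_mul v)) ?_
  have hhalf : MeasurableSet {y : ℝ | (q : ℝ) ≤ v * y} :=
    measurableSet_le measurable_const (measurable_const_mul v)
  exact measurableSet_le (κ.measurable_coe hhalf) (Kernel.measurable_kernel_prodMk_left hS)

/-- Letting `z` range redundantly over the whole space, rather than over a complement of `v`, avoids
disintegrating `μ`; the function `τ` only shifts the parameter on each line. -/
theorem ae_ae_sub_smul_add_smul {F : Type*} [NormedAddCommGroup F] [NormedSpace ℝ F]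
    [LocallyCompactSpace F] [MeasurableSpace F] [BorelSpace F] (μ : Measure F)
    [μ.IsAddHaarMeasure] {p : F → Prop} (hp : ∀ᵐ x ∂μ, p x) (τ : F → ℝ) (v : F) :
    ∀ᵐ z ∂μ, ∀ᵐ t : ℝ, p ((z - τ z • v) + t • v) := by
  obtain ⟨N, hpN, hN, hN0⟩ := exists_measurable_superset_of_null (ae_iff.mp hp)
  have hlines : ∀ᵐ z ∂μ, ∀ᵐ t : ℝ, z + t • v ∈ Nᶜ :=
    (ae_ae_add_linearMap_mem_iff (LinearMap.toSpanSingleton ℝ F v) volume μ hN.compl).mpr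
      (measure_eq_zero_iff_ae_notMem.mp hN0)
  filter_upwards [hlines] with z hz
  filter_upwards [(measurePreserving_sub_right volume (τ z)).quasiMeasurePreserving.ae hz]
    with t ht
  have hshift : z + (t - τ z) • v = (z - τ z • v) + t • v := by module
  by_contra hpt
  exact ht (hshift ▸ hpN hpt)

/-- The weighted measures `fiberMeasure f x v` as a kernel in the base point `x`, so that
measurable dependence on `x` is available. It is the zero kernel unless the density is jointly
measurable. -/
def fiberKernel {n : ℕ} (f : En n → ℝ) (v : En n) : Kernel (En n) ℝ :=
  (Kernel.const (En n) volume).withDensity fun x t => ENNReal.ofReal (f (x + t • v))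

instance {n : ℕ} (f : En n → ℝ) (v : En n) : IsSFiniteKernel (fiberKernel f v) :=
  Kernel.IsSFiniteKernel.withDensity _ fun _ _ => ENNReal.ofReal_ne_top

theorem fiberKernel_apply {n : ℕ} {f : En n → ℝ} (hf : Measurable f) (v x : En n) :
    fiberKernel f v x = fiberMeasure f x v :=
  Kernel.withDensity_apply _ (by fun_prop) x

theorem fiberMeasure_congr_ae {n : ℕ} {f g : En n → ℝ} {x v : En n}
    (hfg : ∀ᵐ t : ℝ, f (x + t • v) = g (x + t • v)) :
    fiberMeasure f x v = fiberMeasure g x v :=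
  withDensity_congr_ae (hfg.mono fun _ ht => congrArg ENNReal.ofReal ht)

theorem measurableSet_ehrhardSymm {n : ℕ} {f : En n → ℝ} (hf : Measurable f) (v : En n)
    {E : Set (En n)} (hE : MeasurableSet E) : MeasurableSet (ehrhardSymm f v E) := by
  have hbase : Measurable fun z : En n => z - ⟪z, v⟫ • v := by fun_prop
  have hline : Measurable fun p : En n × ℝ => (p.1 - ⟪p.1, v⟫ • v) + p.2 • v := by fun_prop
  have hτ : Measurable fun z : En n => ⟪z, v⟫ := by fun_prop
  have hmem := measurableSet_setOf_mem_ehrhard1D ((fiberKernel f v).comap _ hbase) 1 hτ (hline hE)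
  simp only [Kernel.comap_apply, fiberKernel_apply hf] at hmem
  exact hmem

theorem ehrhardSymm_congr_ae {n : ℕ} {f g : En n → ℝ} (hfg : f =ᵐ[volume] g)
    {E F : Set (En n)} (hEF : E =ᵐ[volume] F) (v : En n) :
    ehrhardSymm f v E =ᵐ[volume] ehrhardSymm g v F := by
  filter_upwards [ae_ae_sub_smul_add_smul volume hfg (⟪·, v⟫) v,
    ae_ae_sub_smul_add_smul volume hEF (⟪·, v⟫) v] with z hfgz hEFz
  have hfiber : {t : ℝ | (z - ⟪z, v⟫ • v) + t • v ∈ E}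
      =ᵐ[fiberMeasure g (z - ⟪z, v⟫ • v) v] {t : ℝ | (z - ⟪z, v⟫ • v) + t • v ∈ F} :=
    (withDensity_absolutelyContinuous _ _).ae_le hEFz
  change (⟪z, v⟫ ∈ ehrhard1D _ 1 _) = (⟪z, v⟫ ∈ ehrhard1D _ 1 _)
  rw [fiberMeasure_congr_ae hfgz, ehrhard1D_congr_ae hfiber]

theorem ehrhard_measurability_general {n : ℕ} {f : En n → ℝ} (hf : AEMeasurable f volume)
    {E : Set (En n)} (hE : NullMeasurableSet E volume) (v : En n) :
    NullMeasurableSet (ehrhardSymm f v E) volume :=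
  (measurableSet_ehrhardSymm hf.measurable_mk v
    (measurableSet_toMeasurable volume E)).nullMeasurableSet.congr
      (ehrhardSymm_congr_ae hf.ae_eq_mk hE.toMeasurable_ae_eq.symm v).symm

/-- **Measurability.** Generalized Ehrhard symmetrization with respect to
`μ = f·Lⁿ ∈ 𝒲(ℝⁿ)` preserves Lebesgue measurability. -/
theorem ehrhard_measurability {n : ℕ} (f : En n → ℝ) (f' : En n → En n) (hW : MemW f f')
    (E : Set (En n)) (hE : NullMeasurableSet E volume) (v : En n) (hv : ‖v‖ = 1) :
    NullMeasurableSet (ehrhardSymm f v E) volume :=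
  ehrhard_measurability_general hW.2.1.aemeasurable hE v

end
end

section
/- Let ν = f·L¹ ∈ 𝒲(ℝ) be a PS measure whose density f is continuous on ℝ and satisfies f > 0 everywhere. Then f is symmetric: there exists m ∈ ℝ such that f(m − t) = f(m + t) for all t ∈ ℝ. -/
/-!
Write `F x = ν((-∞, x])` and `M = ν(ℝ)`. For each `a` there is a unique `r a` with
`F (r a) = M - F a`, and `[r a, ∞)` is the symmetrization of `(-∞, a]` in direction `+1`.
Testing the weak derivative against smooth steps shows that the perimeter of a half-line is the
value of the density at its endpoint, so the PS property of `(-∞, a]` says `f (r a) ≤ f a`; since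
`r` is an involution, `f (r a) = f a`. Differentiating `F (r a) = M - F a` then gives `r' = -1`,
that is `r a = 2 m - a`, and `f ∘ r = f` is the symmetry about `m`.
-/

open MeasureTheory Set Filter
open scoped ENNReal Topology

noncomputable section

/-- The weighted variation `‖g‖_{BV_ν(ℝ)}` for `ν = f·L¹` with weak derivative `f'`. -/
noncomputable def bvVar1 (f f' : ℝ → ℝ) (g : ℝ → ℝ) : ℝ≥0∞ :=
  ⨆ (φ : ℝ → ℝ) (_ : ContDiff ℝ 1 φ ∧ HasCompactSupport φ ∧ ∀ x, |φ x| ≤ 1),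
    ENNReal.ofReal (∫ x, g x * (f x * deriv φ x + φ x * f' x))

/-- The weighted perimeter `Per_ν(E)`. -/
noncomputable def perim1 (f f' : ℝ → ℝ) (E : Set ℝ) : ℝ≥0∞ :=
  bvVar1 f f' (E.indicator fun _ => (1 : ℝ))

/-- The measure `ν = f·L¹`. -/
noncomputable def mu1 (f : ℝ → ℝ) : Measure ℝ :=
  volume.withDensity fun x => ENNReal.ofReal (f x)

/-- `ν = f·L¹` is a perimeter symmetrization (PS) measure on `ℝ`. -/
def IsPS1 (f f' : ℝ → ℝ) : Prop :=
  ∀ v : ℝ, (v = 1 ∨ v = -1) → ∀ E : Set ℝ, NullMeasurableSet E volume →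
    perim1 f f' E < ⊤ →
      perim1 f f' (ehrhard1D (mu1 f) v E) ≤ perim1 f f' E

/-- The distribution function of the (signed) measure `f·L¹`. It also turns a bump function into a
smooth step function. -/
def distribFun (f : ℝ → ℝ) (x : ℝ) : ℝ := ∫ y in Iic x, f y

section DistribFun

variable {f : ℝ → ℝ}

lemma hasStrictDerivAt_distribFun (hint : Integrable f) {x : ℝ} (hf : ContinuousAt f x) :
    HasStrictDerivAt (distribFun f) (f x) x := by
  have hshift : distribFun f = fun u => (∫ y in x..u, f y) + distribFun f x := by
    ext u
    rw [← intervalIntegral.integral_Iic_sub_Iic hint.integrableOn hint.integrableOn]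
    exact (sub_add_cancel _ _).symm
  rw [hshift]
  exact (intervalIntegral.integral_hasStrictDerivAt_right hint.intervalIntegrable
    hint.aestronglyMeasurable.stronglyMeasurableAtFilter hf).add_const _

lemma deriv_distribFun (hint : Integrable f) (hf : Continuous f) : deriv (distribFun f) = f :=
  funext fun _ => (hasStrictDerivAt_distribFun hint hf.continuousAt).hasDerivAt.deriv

lemma contDiff_distribFun (hint : Integrable f) (hf : Continuous f) :
    ContDiff ℝ 1 (distribFun f) :=
  contDiff_one_iff_deriv.2
    ⟨fun _ => (hasStrictDerivAt_distribFun hint hf.continuousAt).hasDerivAt.differentiableAt,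
      (deriv_distribFun hint hf).symm ▸ hf⟩

lemma strictMono_distribFun (hint : Integrable f) (hf : Continuous f) (hpos : ∀ x, 0 < f x) :
    StrictMono (distribFun f) :=
  strictMono_of_deriv_pos fun x => by simpa only [deriv_distribFun hint hf] using hpos x

lemma abs_distribFun_le_integral (hint : Integrable f) (hnonneg : 0 ≤ f) (x : ℝ) :
    |distribFun f x| ≤ ∫ y, f y := by
  rw [distribFun, abs_of_nonneg (integral_nonneg hnonneg)]
  exact setIntegral_le_integral hint (ae_of_all _ hnonneg)

lemma setIntegral_Ici_eq_sub_distribFun (hint : Integrable f) (x : ℝ) :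
    ∫ y in Ici x, f y = (∫ y, f y) - distribFun f x := by
  rw [integral_Ici_eq_integral_Ioi, distribFun,
    ← intervalIntegral.integral_Iic_add_Ioi (b := x) hint.integrableOn hint.integrableOn,
    add_sub_cancel_left]

lemma tendsto_distribFun_atTop (hint : Integrable f) :
    Tendsto (distribFun f) atTop (𝓝 (∫ y, f y)) :=
  (aecover_Iic tendsto_id).integral_tendsto_of_countably_generated hint

lemma tendsto_distribFun_atBot (f : ℝ → ℝ) : Tendsto (distribFun f) atBot (𝓝 0) :=
  tendsto_integral_Iic_zero tendsto_id

lemma range_distribFun (hint : Integrable f) (hf : Continuous f) (hpos : ∀ x, 0 < f x) :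
    range (distribFun f) = Ioo 0 (∫ y, f y) := by
  have hmono := strictMono_distribFun hint hf hpos
  apply Subset.antisymm
  · rintro _ ⟨x, rfl⟩
    exact ⟨(hmono.monotone.le_of_tendsto (tendsto_distribFun_atBot f) _).trans_lt
        (hmono (sub_one_lt x)),
      (hmono (lt_add_one x)).trans_le
        (hmono.monotone.ge_of_tendsto (tendsto_distribFun_atTop hint) _)⟩
  · rw [← image_univ]
    exact isPreconnected_univ.intermediate_value_Ioo (by simp) (by simp)
      (contDiff_distribFun hint hf).continuous.continuousOn
      (tendsto_distribFun_atBot f) (tendsto_distribFun_atTop hint)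

lemma exists_distribFun_eq_integral_sub (hint : Integrable f) (hf : Continuous f)
    (hpos : ∀ x, 0 < f x) (a : ℝ) : ∃ b, distribFun f b = (∫ y, f y) - distribFun f a := by
  have hrange := range_distribFun hint hf hpos
  have ha : distribFun f a ∈ Ioo 0 (∫ y, f y) := hrange ▸ mem_range_self a
  change _ ∈ range (distribFun f)
  rw [hrange]
  exact ⟨sub_pos.2 ha.2, sub_lt_self _ ha.1⟩

end DistribFun

section Mollification

variable {ι : Type*} {l : Filter ι} {ψ : ι → ContDiffBump (0 : ℝ)}

open scoped Convolution in
lemma tendsto_distribFun_normed (hψ : Tendsto (fun i => (ψ i).rOut) l (𝓝 0)) {x : ℝ}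
    (hx : x ≠ 0) :
    Tendsto (fun i => distribFun ((ψ i).normed volume) x) l
      (𝓝 ((Ici 0).indicator (fun _ => 1) x)) := by
  have hconv (i : ι) : distribFun ((ψ i).normed volume) x =
      ((ψ i).normed volume ⋆ (Ici 0).indicator fun _ => (1 : ℝ)) x := by
    rw [distribFun, ← integral_indicator measurableSet_Iic, convolution_lsmul]
    refine integral_congr_ae (ae_of_all _ fun t => ?_)
    by_cases ht : t ≤ x <;> simp [ht]
  have hstep : ContinuousAt ((Ici (0 : ℝ)).indicator fun _ => (1 : ℝ)) x :=
    continuousOn_const.continuousAt_indicator (by rwa [frontier_Ici])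
  simp only [hconv]
  exact ContDiffBump.convolution_tendsto_right hψ
    (.of_forall fun _ => (aestronglyMeasurable_const.indicator measurableSet_Ici))
    (hstep.tendsto.comp tendsto_snd) tendsto_const_nhds

lemma tendsto_integral_mul_normed_sub (hψ : Tendsto (fun i => (ψ i).rOut) l (𝓝 0)) {g : ℝ → ℝ}
    (hg : AEStronglyMeasurable g) {a : ℝ} (hga : ContinuousAt g a) :
    Tendsto (fun i => ∫ x, g x * (ψ i).normed volume (a - x)) l (𝓝 (g a)) := by
  have h := ContDiffBump.convolution_tendsto_right (μ := volume) (g := fun _ => g) hψ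
    (.of_forall fun _ => hg) (hga.tendsto.comp tendsto_snd) tendsto_const_nhds
  simpa only [convolution_lsmul_swap, smul_eq_mul, mul_comm] using h

lemma tendsto_integral_mul_distribFun_normed [l.IsCountablyGenerated]
    (hψ : Tendsto (fun i => (ψ i).rOut) l (𝓝 0)) {w : ℝ → ℝ} (hw : Integrable w) (a : ℝ) :
    Tendsto (fun i => ∫ x, w x * distribFun ((ψ i).normed volume) (a - x)) l
      (𝓝 (∫ x in Iic a, w x)) := by
  rw [← integral_indicator measurableSet_Iic]
  refine tendsto_integral_filter_of_dominated_convergence (fun x => |w x|) ?_ ?_ hw.abs ?_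
  · refine .of_forall fun i => hw.aestronglyMeasurable.mul (Continuous.aestronglyMeasurable ?_)
    exact (contDiff_distribFun (ψ i).integrable_normed (ψ i).continuous_normed).continuous.comp
      (continuous_sub_left a)
  · refine .of_forall fun i => ae_of_all _ fun x => ?_
    rw [Real.norm_eq_abs, abs_mul]
    refine mul_le_of_le_one_right (abs_nonneg _) ?_
    exact (abs_distribFun_le_integral (ψ i).integrable_normed (ψ i).nonneg_normed _).trans_eq
      (ψ i).integral_normed
  · filter_upwards [Measure.ae_ne volume a] with x hx
    have h := (tendsto_distribFun_normed hψ (sub_ne_zero.2 hx.symm)).const_mul (w x)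
    by_cases hxa : x ≤ a <;> simpa [hxa] using h

lemma exists_seq_contDiffBump_rOut_tendsto_zero :
    ∃ ψ : ℕ → ContDiffBump (0 : ℝ), Tendsto (fun n => (ψ n).rOut) atTop (𝓝 0) :=
  ⟨fun n => ⟨1 / ((n : ℝ) + 1) / 2, 1 / ((n : ℝ) + 1), by positivity,
    half_lt_self (by positivity)⟩, tendsto_one_div_add_atTop_nhds_zero_nat⟩

end Mollification

namespace HasWeakDeriv

variable {f f' φ : ℝ → ℝ}

lemma mul_contDiff (hW : HasWeakDeriv f f') {η : ℝ → ℝ} (hη : ContDiff ℝ 1 η) :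
    HasWeakDeriv (fun x => f x * η x) (fun x => f x * deriv η x + η x * f' x) := by
  have hη' := hη.continuous_deriv le_rfl
  refine ⟨hW.1.mul_continuous hη.continuous,
    (hW.1.mul_continuous hη').add (hW.2.1.continuous_mul hη.continuous), fun φ hφ hφs => ?_⟩
  have hprod (x : ℝ) : deriv (η * φ) x = deriv η x * φ x + η x * deriv φ x :=
    deriv_mul (hη.differentiable one_ne_zero x) (hφ.differentiable one_ne_zero x)
  have hint₁ : Integrable fun x => f x * deriv (η * φ) x :=
    hW.1.integrable_smul_right_of_hasCompactSupport ((hη.mul hφ).continuous_deriv le_rfl)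
      (hφs.mul_left (f := η)).deriv
  have hint₂ : Integrable fun x => f x * (deriv η x * φ x) :=
    hW.1.integrable_smul_right_of_hasCompactSupport (hη'.mul hφ.continuous) hφs.mul_left
  have hint₃ : Integrable fun x => (η * φ) x * f' x :=
    hW.2.1.integrable_smul_left_of_hasCompactSupport (hη.continuous.mul hφ.continuous)
      hφs.mul_left
  calc ∫ x, f x * η x * deriv φ x
      = ∫ x, (f x * deriv (η * φ) x - f x * (deriv η x * φ x)) := by
        congr with x; rw [hprod]; ring
    _ = -((∫ x, (η * φ) x * f' x) + ∫ x, f x * (deriv η x * φ x)) := by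
        rw [integral_sub hint₁ hint₂, hW.2.2 (η * φ) (hη.mul hφ) hφs.mul_left]; ring
    _ = -∫ x, φ x * (f x * deriv η x + η x * f' x) := by
        rw [← integral_add hint₃ hint₂]; congr with x; simp only [Pi.mul_apply]; ring

lemma integrable_mul_deriv_add (hW : HasWeakDeriv f f') (hφ : ContDiff ℝ 1 φ)
    (hφs : HasCompactSupport φ) : Integrable fun x => f x * deriv φ x + φ x * f' x :=
  .add (hW.1.integrable_smul_right_of_hasCompactSupport (hφ.continuous_deriv le_rfl) hφs.deriv)
    (hW.2.1.integrable_smul_left_of_hasCompactSupport hφ.continuous hφs)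

lemma integral_mul_deriv_add (hW : HasWeakDeriv f f') (hφ : ContDiff ℝ 1 φ)
    (hφs : HasCompactSupport φ) : ∫ x, (f x * deriv φ x + φ x * f' x) = 0 := by
  rw [integral_add, hW.2.2 φ hφ hφs, neg_add_cancel]
  · exact hW.1.integrable_smul_right_of_hasCompactSupport (hφ.continuous_deriv le_rfl) hφs.deriv
  · exact hW.2.1.integrable_smul_left_of_hasCompactSupport hφ.continuous hφs

lemma integral_mul_deriv_add_mul (hW : HasWeakDeriv f f') (hφ : ContDiff ℝ 1 φ)
    (hφs : HasCompactSupport φ) {η : ℝ → ℝ} (hη : ContDiff ℝ 1 η) :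
    ∫ x, (f x * deriv φ x + φ x * f' x) * η x = -∫ x, f x * φ x * deriv η x := by
  have hint : Integrable fun x => f x * (φ x * deriv η x) :=
    hW.1.integrable_smul_right_of_hasCompactSupport
      (hφ.continuous.mul (hη.continuous_deriv le_rfl)) hφs.mul_right
  have hWη := hW.mul_contDiff hη
  simp only [mul_assoc (f _) (φ _)]
  rw [← zero_sub, ← hWη.integral_mul_deriv_add hφ hφs,
    ← integral_sub (hWη.integrable_mul_deriv_add hφ hφs) hint]
  congr with x
  ring

/-- `𝟙_{(-∞, a]}` is approximated by smooth steps whose derivatives `-ψ (a - ·)` concentrate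
at `a`. -/
lemma setIntegral_Iic_mul_deriv_add (hW : HasWeakDeriv f f') (hφ : ContDiff ℝ 1 φ)
    (hφs : HasCompactSupport φ) {a : ℝ} (hfa : ContinuousAt f a) :
    ∫ x in Iic a, (f x * deriv φ x + φ x * f' x) = f a * φ a := by
  obtain ⟨ψ, hψ⟩ := exists_seq_contDiffBump_rOut_tendsto_zero
  have hstep (n : ℕ) : ∫ x, (f x * deriv φ x + φ x * f' x) *
        distribFun ((ψ n).normed volume) (a - x) =
      ∫ x, f x * φ x * (ψ n).normed volume (a - x) := by
    have hψi := (ψ n).integrable_normed (μ := volume)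
    have hψc := (ψ n).continuous_normed (μ := volume)
    have hη : ContDiff ℝ 1 fun x => distribFun ((ψ n).normed volume) (a - x) :=
      (contDiff_distribFun hψi hψc).comp (contDiff_const.sub contDiff_id)
    simp only [hW.integral_mul_deriv_add_mul hφ hφs hη, deriv_comp_const_sub,
      deriv_distribFun hψi hψc, mul_neg, integral_neg, neg_neg]
  have hlim := tendsto_integral_mul_distribFun_normed hψ (hW.integrable_mul_deriv_add hφ hφs) a
  simp only [hstep] at hlim
  exact tendsto_nhds_unique hlim (tendsto_integral_mul_normed_sub hψ
    (hW.1.aestronglyMeasurable.mul hφ.continuous.aestronglyMeasurable)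
    (hfa.mul hφ.continuous.continuousAt))

lemma setIntegral_Ici_mul_deriv_add (hW : HasWeakDeriv f f') (hφ : ContDiff ℝ 1 φ)
    (hφs : HasCompactSupport φ) {a : ℝ} (hfa : ContinuousAt f a) :
    ∫ x in Ici a, (f x * deriv φ x + φ x * f' x) = -(f a * φ a) := by
  rw [setIntegral_Ici_eq_sub_distribFun (hW.integrable_mul_deriv_add hφ hφs),
    hW.integral_mul_deriv_add hφ hφs, distribFun, hW.setIntegral_Iic_mul_deriv_add hφ hφs hfa,
    zero_sub]

end HasWeakDeriv

section Perimeter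

variable {f f' : ℝ → ℝ} {a : ℝ}

lemma exists_contDiff_hasCompactSupport_abs_le_one (a : ℝ) {s : ℝ} (hs : |s| ≤ 1) :
    ∃ φ : ℝ → ℝ, (ContDiff ℝ 1 φ ∧ HasCompactSupport φ ∧ ∀ x, |φ x| ≤ 1) ∧ φ a = s := by
  let b : ContDiffBump a := ⟨1, 2, one_pos, one_lt_two⟩
  refine ⟨fun x => s * b x, ⟨contDiff_const.mul b.contDiff, b.hasCompactSupport.mul_left,
    fun x => ?_⟩, ?_⟩
  · rw [abs_mul, abs_of_nonneg b.nonneg]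
    exact mul_le_one₀ hs b.nonneg b.le_one
  · change s * b a = s
    rw [b.one_of_mem_closedBall (Metric.mem_closedBall_self b.rIn_pos.le), mul_one]

/-- The hypothesis says that the distribution `(f·𝟙_E)' - f'·𝟙_E` is `-c δ_a`. -/
lemma perim1_eq_ofReal_abs_of_forall_setIntegral {E : Set ℝ} (hE : MeasurableSet E) {c : ℝ}
    (h : ∀ φ : ℝ → ℝ, ContDiff ℝ 1 φ → HasCompactSupport φ →
      ∫ x in E, (f x * deriv φ x + φ x * f' x) = c * φ a) :
    perim1 f f' E = ENNReal.ofReal |c| := by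
  have hind (φ : ℝ → ℝ) :
      ∫ x, E.indicator (fun _ => (1 : ℝ)) x * (f x * deriv φ x + φ x * f' x) =
        ∫ x in E, (f x * deriv φ x + φ x * f' x) := by
    rw [← integral_indicator hE]
    congr with x
    by_cases hx : x ∈ E <;> simp [hx]
  simp only [perim1, bvVar1, hind]
  apply le_antisymm
  · refine iSup₂_le fun φ hφ => ENNReal.ofReal_le_ofReal ?_
    rw [h φ hφ.1 hφ.2.1]
    refine (le_abs_self _).trans ?_
    rw [abs_mul]
    exact mul_le_of_le_one_right (abs_nonneg c) (hφ.2.2 a)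
  · have hsign : |(SignType.sign c : ℝ)| ≤ 1 := by
      rcases SignType.sign c <;> simp
    obtain ⟨φ, hφ, hφa⟩ := exists_contDiff_hasCompactSupport_abs_le_one a hsign
    refine le_iSup₂_of_le φ hφ ?_
    rw [h φ hφ.1 hφ.2.1, hφa, self_mul_sign]

lemma perim1_Iic (hW : HasWeakDeriv f f') (hfa : ContinuousAt f a) :
    perim1 f f' (Iic a) = ENNReal.ofReal |f a| :=
  perim1_eq_ofReal_abs_of_forall_setIntegral measurableSet_Iic fun _ hφ hφs =>
    hW.setIntegral_Iic_mul_deriv_add hφ hφs hfa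

lemma perim1_Ici (hW : HasWeakDeriv f f') (hfa : ContinuousAt f a) :
    perim1 f f' (Ici a) = ENNReal.ofReal |f a| := by
  rw [← abs_neg]
  refine perim1_eq_ofReal_abs_of_forall_setIntegral (a := a) measurableSet_Ici fun φ hφ hφs => ?_
  rw [hW.setIntegral_Ici_mul_deriv_add hφ hφs hfa, neg_mul]

end Perimeter

section Symmetrization

lemma ehrhard1D_one_eq_Ici {ν : Measure ℝ} {A : Set ℝ} {b : ℝ}
    (h : ∀ c, ν (Ici c) ≤ ν A ↔ b ≤ c) : ehrhard1D ν 1 A = Ici b := by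
  ext t
  have hlevel (c : ℝ) : ν {y | c ≤ y} ≤ ν A ↔ b ≤ c := h c
  simp only [ehrhard1D, one_mul, hlevel, mem_ofPred_eq, mem_Ici]
  exact ⟨fun ht => ht b fun _ => id, fun hbt d hd => (hd b le_rfl).trans hbt⟩

variable {f : ℝ → ℝ}

lemma mu1_apply (hint : Integrable f) (hnonneg : ∀ x, 0 ≤ f x) {s : Set ℝ}
    (hs : MeasurableSet s) : mu1 f s = ENNReal.ofReal (∫ y in s, f y) := by
  rw [mu1, withDensity_apply _ hs,
    ofReal_integral_eq_lintegral_ofReal hint.integrableOn (ae_of_all _ hnonneg)]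

lemma ehrhard1D_mu1_Iic (hint : Integrable f) (hf : Continuous f) (hpos : ∀ x, 0 < f x)
    {a b : ℝ} (hab : distribFun f b = (∫ y, f y) - distribFun f a) :
    ehrhard1D (mu1 f) 1 (Iic a) = Ici b := by
  have hnonneg (x : ℝ) : 0 ≤ f x := (hpos x).le
  refine ehrhard1D_one_eq_Ici fun c => ?_
  calc mu1 f (Ici c) ≤ mu1 f (Iic a)
      ↔ (∫ y, f y) - distribFun f c ≤ distribFun f a := by
        rw [mu1_apply hint hnonneg measurableSet_Ici, mu1_apply hint hnonneg measurableSet_Iic,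
          ENNReal.ofReal_le_ofReal_iff (integral_nonneg hnonneg),
          setIntegral_Ici_eq_sub_distribFun hint]
        rfl
    _ ↔ distribFun f b ≤ distribFun f c := by rw [hab, sub_le_comm]
    _ ↔ b ≤ c := (strictMono_distribFun hint hf hpos).le_iff_le

end Symmetrization

lemma exists_symmetry_center_of_reflection {f F r : ℝ → ℝ} {M : ℝ}
    (hF : ∀ x, HasStrictDerivAt F (f x) x) (hpos : ∀ x, 0 < f x)
    (hFr : ∀ a, F (r a) = M - F a) (hfr : ∀ a, f (r a) = f a) :
    ∃ m, ∀ t, f (m - t) = f (m + t) := by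
  have hinj : F.Injective :=
    (strictMono_of_deriv_pos fun x => (hF x).hasDerivAt.deriv.symm ▸ hpos x).injective
  have hinv : ∀ x, Function.invFun F (F x) = x := Function.leftInverse_invFun hinj
  have hr (a : ℝ) : r a = Function.invFun F (M - F a) := by rw [← hFr, hinv]
  have hr' (a : ℝ) : HasDerivAt r (-1) a := by
    have hquantile : HasDerivAt (Function.invFun F) (f a)⁻¹ (M - F a) := by
      rw [← hFr, ← hfr]
      exact ((hF (r a)).to_local_left_inverse (hpos _).ne' (.of_forall hinv)).hasDerivAt
    rw [funext hr]
    exact (hquantile.comp a ((hF a).hasDerivAt.const_sub M)).congr_deriv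
      (by rw [mul_neg, inv_mul_cancel₀ (hpos a).ne'])
  have hsum (a : ℝ) : r a + a = r 0 := by
    have hderiv (x : ℝ) : HasDerivAt (fun x => r x + x) 0 x := by
      simpa only [neg_add_cancel] using (hr' x).fun_add (hasDerivAt_id' x)
    simpa using is_const_of_deriv_eq_zero (fun x => (hderiv x).differentiableAt)
      (fun x => (hderiv x).deriv) a 0
  refine ⟨r 0 / 2, fun t => ?_⟩
  rw [← hfr (r 0 / 2 + t)]
  congr 1
  linarith [hsum (r 0 / 2 + t)]

theorem ps_measure_symmetric_general {f f' : ℝ → ℝ} (hint : Integrable f)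
    (hW : HasWeakDeriv f f') (hcont : Continuous f) (hpos : ∀ x, 0 < f x)
    (hPS : ∀ a, perim1 f f' (ehrhard1D (mu1 f) 1 (Iic a)) ≤ perim1 f f' (Iic a)) :
    ∃ m : ℝ, ∀ t : ℝ, f (m - t) = f (m + t) := by
  choose r hr using exists_distribFun_eq_integral_sub hint hcont hpos
  have hinvol (a : ℝ) : r (r a) = a :=
    (strictMono_distribFun hint hcont hpos).injective (by rw [hr, hr, sub_sub_cancel])
  have hle (a : ℝ) : f (r a) ≤ f a := by
    simpa only [ehrhard1D_mu1_Iic hint hcont hpos (hr a), perim1_Ici hW hcont.continuousAt,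
      perim1_Iic hW hcont.continuousAt, abs_of_pos (hpos _),
      ENNReal.ofReal_le_ofReal_iff (hpos a).le] using hPS a
  have heq (a : ℝ) : f (r a) = f a :=
    (hle a).antisymm (by simpa only [hinvol] using hle (r a))
  exact exists_symmetry_center_of_reflection
    (fun _ => hasStrictDerivAt_distribFun hint hcont.continuousAt) hpos hr heq

/-- A one-dimensional PS measure with continuous, strictly positive density in
`𝒲(ℝ)` has a symmetric density. -/
theorem ps_measure_symmetric (f f' : ℝ → ℝ)
    (hnonneg : ∀ x, 0 ≤ f x) (hint : Integrable f volume) (hW : HasWeakDeriv f f')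
    (hcont : Continuous f) (hpos : ∀ x, 0 < f x)
    (hPS : IsPS1 f f') :
    ∃ m : ℝ, ∀ t : ℝ, f (m - t) = f (m + t) :=
  ps_measure_symmetric_general hint hW hcont hpos fun _ =>
    hPS 1 (.inl rfl) _ nullMeasurableSet_Iic
      (perim1_Iic hW hcont.continuousAt ▸ ENNReal.ofReal_lt_top)

end
end
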